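/- arXiv:2506.17071 — 3 statements merged into one kernel-verified Lean document; each statement's English description precedes it below -/
import Mathlib

section
/- Let k be a field and let f : X → Y be a morphism over k between separated k-schemes of finite type. Assume: (i) X is equidimensional, i.e. every irreducible component of X has dimension equal to dim X; (ii) Y is irreducible; (iii) Y is smooth over k; (iv) for every closed point y of Y, the scheme-theoretic fiber X_y = X ×_Y Spec κ(y) is smooth over the residue field κ(y) and of pure dimension dim X − dim Y. Then X is smooth over k and f is a smooth morphism. -/
open AlgebraicGeometry CategoryTheory Limits

universe u

section

open Algebra
theorem dim_le_of_qf {R S : Type*} [CommRing R] [CommRing S] [Algebra R S] [Algebra.QuasiFinite R S] :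
    ringKrullDim S ≤ ringKrullDim R := by
  refine Order.krullDim_le_of_strictMono (PrimeSpectrum.comap (algebraMap R S)) fun P Q h => ?_
  refine lt_of_le_of_ne (Ideal.comap_mono h.le) fun e => h.ne ?_
  ext1
  exact Algebra.QuasiFinite.eq_of_le_of_under_eq (R := R) P.asIdeal Q.asIdeal h.le (congrArg PrimeSpectrum.asIdeal e)

theorem exists_ltSeries_goingUp {R S : Type*} [CommRing R] [CommRing S] [Algebra R S] [Algebra.IsIntegral R S]
    (l : LTSeries (PrimeSpectrum R)) : ∀ Q : PrimeSpectrum S, PrimeSpectrum.comap (algebraMap R S) Q = l.head →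
    ∃ L : LTSeries (PrimeSpectrum S), L.head = Q ∧ L.length = l.length := by
  induction l using RelSeries.inductionOn with
  | singleton p => intro Q _; exact ⟨RelSeries.singleton _ Q, rfl, rfl⟩
  | cons l p hlt ih =>
    intro Q hQ
    have hQ' : PrimeSpectrum.comap (algebraMap R S) Q = p := by simpa using hQ
    have hlt' : p < l.head := hlt
    obtain ⟨Q', h1, h2, h3⟩ := Ideal.exists_ideal_over_prime_of_isIntegral (S := S) l.head.asIdeal Q.asIdeal
      (by change (PrimeSpectrum.comap (algebraMap R S) Q).asIdeal ≤ _; rw [hQ']; exact hlt'.le)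
    obtain ⟨L, hL, hl⟩ := ih ⟨Q', h2⟩ (PrimeSpectrum.ext h3)
    have : Q < L.head := by
      rw [hL]
      refine lt_of_le_of_ne h1 fun e => hlt'.ne ?_
      rw [← hQ', e]; exact PrimeSpectrum.ext h3
    exact ⟨L.cons Q this, by simp, by simp [hl]⟩

theorem dim_eq_of_integral {R S : Type*} [CommRing R] [CommRing S] [Algebra R S] [Algebra.IsIntegral R S]
    (hinj : Function.Injective (algebraMap R S)) : ringKrullDim S = ringKrullDim R := by
  apply le_antisymm
  · refine Order.krullDim_le_of_strictMono (PrimeSpectrum.comap (algebraMap R S)) fun P Q h => ?_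
    exact Ideal.comap_lt_comap_of_integral_mem_sdiff h.le (Set.exists_of_ssubset h).choose_spec (Algebra.IsIntegral.isIntegral _)
  · refine iSup_le fun l => ?_
    obtain ⟨Q', h1, h2, h3⟩ := Ideal.exists_ideal_over_prime_of_isIntegral (S := S) l.head.asIdeal ⊥
      (by rw [← RingHom.ker_eq_comap_bot, (RingHom.injective_iff_ker_eq_bot _).1 hinj]; exact bot_le)
    obtain ⟨L, hL, hl⟩ := exists_ltSeries_goingUp (S := S) l ⟨Q', h2⟩ (PrimeSpectrum.ext h3)
    rw [← hl]
    exact le_iSup (fun L : LTSeries (PrimeSpectrum S) => ((L.length : ℕ∞) : WithBot ℕ∞)) L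


theorem trdeg_toENat_eq (k S A : Type*) [Field k] [CommRing S] [CommRing A] [IsDomain A] [Algebra k S] [Algebra k A]
    [Algebra S A] [IsScalarTower k S A] [Algebra.IsAlgebraic S A] (hinj : Function.Injective (algebraMap S A)) :
    (Algebra.trdeg k A).toENat = (Algebra.trdeg k S).toENat := by
  have := (faithfulSMul_iff_algebraMap_injective _ _).2 hinj
  have : IsDomain S := hinj.isDomain (algebraMap S A)
  have h1 := lift_trdeg_add_eq (R := k) (S := S) (A := A)
  have h2 : Algebra.trdeg S A = 0 := trdeg_eq_zero
  rw [h2] at h1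
  have := congrArg Cardinal.toENat h1
  simpa using this.symm

/-- Krull dimension of a finitely generated domain is its transcendence degree -/
theorem dim_eq_trdeg (k : Type*) {A : Type*} [Field k] [CommRing A] [IsDomain A] [Algebra k A] [Algebra.FiniteType k A] :
    ringKrullDim A = ((Algebra.trdeg k A).toENat : WithBot ℕ∞) := by
  obtain ⟨s, g, hg, hi⟩ := exists_integral_inj_algHom_of_fg k A
  let _ := g.toRingHom.toAlgebra
  have : IsScalarTower k (MvPolynomial (Fin s) k) A := .of_algebraMap_eq' g.comp_algebraMap.symm
  have : Algebra.IsIntegral (MvPolynomial (Fin s) k) A := ⟨hi⟩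
  have hinj : Function.Injective (algebraMap (MvPolynomial (Fin s) k) A) := hg
  rw [dim_eq_of_integral hinj, MvPolynomial.ringKrullDim_of_isNoetherianRing, trdeg_toENat_eq k _ A hinj]
  rw [MvPolynomial.trdeg_of_isDomain]; simp

theorem dim_eq_trdeg' (k : Type*) {A L : Type*} [Field k] [CommRing A] [CommRing L] [IsDomain L]
    [Algebra k A] [Algebra.FiniteType k A]
    [Algebra k L] [Algebra A L] [IsScalarTower k A L] [Algebra.IsAlgebraic A L] (hinj : Function.Injective (algebraMap A L)) :
    ringKrullDim A = ((Algebra.trdeg k L).toENat : WithBot ℕ∞) := by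
  have : IsDomain A := hinj.isDomain (algebraMap A L)
  rw [dim_eq_trdeg k, trdeg_toENat_eq k A L hinj]

theorem le_dim_of_injective {k A : Type*} [Field k] [CommRing A] [IsDomain A] [Algebra k A] [Algebra.FiniteType k A]
   {n : ℕ} (g : MvPolynomial (Fin n) k →ₐ[k] A) (hg : Function.Injective g) : (n : WithBot ℕ∞) ≤ ringKrullDim A := by
  rw [dim_eq_trdeg k]
  have : AlgebraicIndependent k (fun i => g (.X i)) := by
    have : g = MvPolynomial.aeval (fun i => g (.X i)) := by ext; simp
    rw [algebraicIndependent_iff_injective_aeval, ← this]; exact hg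
  have h := this.lift_cardinalMk_le_trdeg
  have := OrderHomClass.mono Cardinal.toENat h
  simp at this
  have h' := Cardinal.natCast_le_toENat.2 this
  exact_mod_cast h'

theorem comap_minimal_of_flat {P B : Type*} [CommRing P] [IsDomain P] [CommRing B] [Algebra P B] [Module.Flat P B]
   (p : Ideal B) (hp : p ∈ minimalPrimes B) : p.comap (algebraMap P B) = ⊥ := by
  have := hp.1.1
  obtain ⟨q, hq, h1, h2⟩ := Ideal.exists_ideal_le_liesOver_of_le (p := (⊥ : Ideal P)) (q := p.comap (algebraMap P B)) p bot_le
  have : q = p := le_antisymm hq (hp.2 ⟨h1, bot_le⟩ hq)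
  subst this
  exact h2.over.symm

/-- (F1) -/
theorem le_dim_of_etale {k B : Type*} [Field k] [CommRing B] [Algebra k B] {n : ℕ} [Algebra (MvPolynomial (Fin n) k) B]
    [IsScalarTower k (MvPolynomial (Fin n) k) B] [Algebra.Etale (MvPolynomial (Fin n) k) B]
    (p : Ideal B) (hp : p ∈ minimalPrimes B) : (n : WithBot ℕ∞) ≤ ringKrullDim (B ⧸ p) := by
  have := hp.1.1
  have : FiniteType k B := .trans (S := MvPolynomial (Fin n) k) inferInstance inferInstance
  refine le_dim_of_injective (IsScalarTower.toAlgHom k (MvPolynomial (Fin n) k) (B ⧸ p)) ?_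
  change Function.Injective (algebraMap (MvPolynomial (Fin n) k) (B ⧸ p))
  rw [RingHom.injective_iff_ker_eq_bot, IsScalarTower.algebraMap_eq _ B (B ⧸ p), ← RingHom.comap_ker]
  rw [Ideal.Quotient.algebraMap_eq, Ideal.mk_ker]
  exact comap_minimal_of_flat p hp

/-- (F2) -/
theorem dim_le_of_etale {k B : Type*} [Field k] [CommRing B] [Algebra k B] {n : ℕ} [Algebra (MvPolynomial (Fin n) k) B]
    [Algebra.Etale (MvPolynomial (Fin n) k) B] : ringKrullDim B ≤ n := by
  refine (dim_le_of_qf (R := MvPolynomial (Fin n) k)).trans ?_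
  rw [MvPolynomial.ringKrullDim_of_isNoetherianRing]; simp

theorem vnr {L : Type*} [CommRing L] [IsReduced L] [IsArtinianRing L] (a : L) : ∃ x, a * a * x = a := by
  obtain ⟨n, y, hy⟩ := IsArtinian.exists_pow_succ_smul_dvd a (1 : L)
  refine ⟨y, ?_⟩
  have h : a ^ n * (1 - a * y) = 0 := by
    simp only [smul_eq_mul, mul_one] at hy
    rw [pow_succ] at hy
    linear_combination - hy
  have h2 : (a * (1 - a * y)) ^ (n+1) = 0 := by
    rw [mul_pow]
    linear_combination (1 - a*y)^n * a *h
  have := pow_eq_zero_iff (n.succ_ne_zero) |>.1 h2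
  linear_combination - this

open TensorProduct in
/-- (F3) -/
theorem etale_locally_domain {P B : Type*} [CommRing P] [IsDomain P] [IsIntegrallyClosed P] [CommRing B] [Algebra P B]
    [Algebra.Etale P B] (n : Ideal B) [n.IsPrime] (a b : B) (h : a * b = 0) : ∃ s ∉ n, s * a = 0 ∨ s * b = 0 := by
  let K := FractionRing P
  let L := B ⊗[P] K
  let e : K ⊗[P] B ≃ₐ[P] L := Algebra.TensorProduct.comm _ _ _
  have : Module.Finite K (K ⊗[P] B) := FormallyUnramified.finite_of_free _ _
  have : IsArtinianRing (K ⊗[P] B) := IsArtinianRing.of_finite K _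
  have : IsArtinianRing L := e.toRingEquiv.isArtinianRing
  have : IsReduced (K ⊗[P] B) := FormallyUnramified.isReduced_of_field K _
  have : IsReduced L := isReduced_of_injective e.symm e.symm.injective
  have hinj : Function.Injective (algebraMap B L) := by
    exact Algebra.TensorProduct.includeLeft_injective (S := B) (IsFractionRing.injective P K)
  have hcl (x : L) (hx : IsIntegral B x) : ∃ y, algebraMap B L y = x := by
    obtain ⟨z, hz⟩ := (TensorProduct.toIntegralClosure_bijective_of_smooth (R := P) (S := B) (B := K)).2 ⟨x, hx⟩
    replace hz := congrArg Subtype.val hz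
    change _ = x at hz
    clear hx
    subst hz
    induction z with
    | zero => exact ⟨0, by simp⟩
    | add x y h1 h2 =>
      obtain ⟨y1, h1⟩ := h1
      obtain ⟨y2, h2⟩ := h2
      exact ⟨y1 + y2, by simp [h1, h2]⟩
    | tmul x y =>
      obtain ⟨w, hw⟩ := IsIntegrallyClosed.isIntegral_iff.1 y.2
      refine ⟨w • x, ?_⟩
      have : TensorProduct.toIntegralClosure P B K (x ⊗ₜ y) = (x ⊗ₜ[P] (y : K)) := by
        simp [TensorProduct.toIntegralClosure]
      rw [this, ← hw, Algebra.TensorProduct.algebraMap_apply, Algebra.algebraMap_eq_smul_one w, TensorProduct.tmul_smul,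
        TensorProduct.smul_tmul']
      rfl
  obtain ⟨x, hx⟩ := vnr (algebraMap B L a)
  set α := algebraMap B L a
  have hab : α * algebraMap B L b = 0 := by rw [← map_mul, h, map_zero]
  have hid : (α * x) * (α * x) = α * x := by linear_combination x * hx
  obtain ⟨ε, hε⟩ := hcl (α * x) ⟨.X ^ 2 - .X, by monicity!, by simp; linear_combination hid⟩
  have h1 : ε * b = 0 := hinj (by rw [map_mul, hε, map_zero]; linear_combination x * hab)
  have h2 : (1 - ε) * a = 0 := hinj (by rw [map_mul, map_sub, hε, map_zero, map_one]; linear_combination -hx)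
  by_cases hn : ε ∈ n
  · refine ⟨1 - ε, fun h => ?_, .inl h2⟩
    exact Ideal.IsPrime.ne_top ‹_› ((Ideal.eq_top_iff_one n).2 (by simpa using add_mem h hn))
  · exact ⟨ε, hn, .inr h1⟩

end

section

open Algebra

theorem ker_locally_zero {P B A : Type*} [CommRing P] [IsDomain P] [IsIntegrallyClosed P] [CommRing B] [Algebra P B]
    [Algebra.Etale P B] [CommRing A] (N : ℕ) (hP : ringKrullDim P ≤ N) (φ : B →+* A) (hφ : Function.Surjective φ)
    (n : Ideal A) [n.IsPrime] (hq : ∀ q ∈ minimalPrimes A, (N : WithBot ℕ∞) ≤ ringKrullDim (A ⧸ q))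
    (b : B) (hb : φ b = 0) : ∃ s ∉ n.comap φ, s * b = 0 := by
  obtain ⟨q, hqm, hqn⟩ := Ideal.exists_minimalPrimes_le (bot_le : ⊥ ≤ n)
  have := hqm.1.1
  obtain ⟨p, hpm, hpn⟩ := Ideal.exists_minimalPrimes_le (bot_le : ⊥ ≤ q.comap φ)
  have := hpm.1.1
  have hdim : ringKrullDim B ≤ N := (dim_le_of_qf (R := P)).trans hP
  have e : (B ⧸ q.comap φ) ≃+* (A ⧸ q) :=
    (Ideal.quotEquivOfEq (by ext; simp [RingHom.mem_ker, Ideal.Quotient.eq_zero_iff_mem])).trans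
      (RingHom.quotientKerEquivOfSurjective (f := (Ideal.Quotient.mk q).comp φ) (Ideal.Quotient.mk_surjective.comp hφ))
  have h1 : (N : WithBot ℕ∞) ≤ ringKrullDim (B ⧸ q.comap φ) := (hq q hqm).trans_eq (ringKrullDim_eq_of_ringEquiv e).symm
  have hpq : p = q.comap φ := by
    by_contra hne
    have hlt : p < q.comap φ := lt_of_le_of_ne hpn hne
    obtain ⟨x, hx, hxp⟩ := Set.exists_of_ssubset hlt
    have h2 := ringKrullDim_succ_le_of_surjective (R := B ⧸ p) (S := B ⧸ q.comap φ) (Ideal.Quotient.factor hpn)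
      (Ideal.Quotient.factor_surjective hpn) (r := Ideal.Quotient.mk p x) (by
        rw [mem_nonZeroDivisors_iff_ne_zero, Ne, Ideal.Quotient.eq_zero_iff_mem]; exact hxp)
        (by simpa [Ideal.Quotient.eq_zero_iff_mem] using hx)
    have h3 : ringKrullDim (B ⧸ p) ≤ N := (ringKrullDim_quotient_le p).trans hdim
    have h4 : (N : WithBot ℕ∞) + 1 ≤ N := ((add_le_add_left h1 1).trans h2).trans h3
    have h5 : N + 1 ≤ N := by exact_mod_cast h4
    omega
  -- b is in the minimal prime p
  have hbp : b ∈ p := by rw [hpq]; simp [hb]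
  obtain ⟨m, s, hs, hm⟩ : ∃ m : ℕ, ∃ s ∉ p, s * b ^ m = 0 := by
    by_contra! hcon
    have hdisj : Disjoint ((⊥ : Ideal B) : Set B) ((p.primeCompl ⊔ Submonoid.powers b : Submonoid B) : Set B) := by
      rw [Set.disjoint_left]
      rintro x hx h
      obtain ⟨y, hy, z, ⟨m, rfl⟩, rfl⟩ := Submonoid.mem_sup.1 h
      exact hcon m y hy (by simpa using hx)
    obtain ⟨Q, hQ, -, h2⟩ := Ideal.exists_le_prime_disjoint _ _ hdisj
    have hQp : Q ≤ p := fun x hx => by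
      by_contra hxp
      exact Set.disjoint_left.1 h2 hx (Submonoid.mem_sup_left (S := p.primeCompl) hxp)
    have := hpm.2 ⟨hQ, bot_le⟩ hQp hbp
    exact Set.disjoint_left.1 h2 this (Submonoid.mem_sup_right (Submonoid.mem_powers b))
  have key : ∀ m : ℕ, ∀ s ∉ p, s * b ^ m = 0 → ∃ s ∉ n.comap φ, s * b = 0 := by
    intro m
    have aux : ∀ s ∉ p, ∀ t ∉ n.comap φ, t * s ≠ 0 := by
      intro s hs t ht h
      have : t * s ∈ p := h ▸ p.zero_mem
      rcases hpm.1.1.mem_or_mem this with h | h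
      · exact ht (by rw [hpq] at h; exact Ideal.comap_mono hqn h)
      · exact hs h
    induction m with
    | zero =>
      intro s hs h
      exact absurd (by simpa using h) (aux s hs 1 (by rw [← Ideal.ne_top_iff_one]; exact Ideal.IsPrime.ne_top inferInstance))
    | succ m ih =>
      intro s hs h
      obtain ⟨t, ht, h | h⟩ := etale_locally_domain (P := P) (n.comap φ) (s * b ^ m) b (by rw [mul_assoc, ← pow_succ, h])
      · refine ih (t * s) (fun hc => ?_) (by rw [mul_assoc, h])
        rcases hpm.1.1.mem_or_mem hc with h | h
        · exact ht (by rw [hpq] at h; exact Ideal.comap_mono hqn h)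
        · exact hs h
      · exact ⟨t, ht, h⟩
  exact key m s hs hm

/-- local iso -/
theorem formallySmooth_of_cmp {R B A : Type*} [CommRing R] [CommRing B] [CommRing A] [Algebra R B] [Algebra R A]
   [FormallySmooth R B] (φ : B →ₐ[R] A) (hφ : Function.Surjective φ) (n : Ideal A) [n.IsPrime]
   (h : ∀ b, φ b = 0 → ∃ s ∉ n.comap φ, s * b = 0) : FormallySmooth R (Localization.AtPrime n) := by
  let _ := ((algebraMap A (Localization.AtPrime n)).comp (φ : B →+* A)).toAlgebra
  have hB : ∀ b, algebraMap B (Localization.AtPrime n) b = algebraMap A _ (φ b) := fun _ => rfl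
  have : IsScalarTower R B (Localization.AtPrime n) := .of_algebraMap_eq fun r => by
    rw [hB, AlgHom.commutes, ← IsScalarTower.algebraMap_apply]
  have : IsLocalization (n.comap φ).primeCompl (Localization.AtPrime n) := by
    refine ⟨?_, ?_, ?_⟩
    · rintro ⟨y, hy⟩
      exact IsLocalization.map_units (Localization.AtPrime n) (⟨φ y, hy⟩ : n.primeCompl)
    · intro z
      obtain ⟨⟨x, y, hy⟩, hz⟩ := IsLocalization.surj n.primeCompl z
      obtain ⟨x, rfl⟩ := hφ x
      obtain ⟨y, rfl⟩ := hφ y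
      exact ⟨⟨x, y, hy⟩, hz⟩
    · intro x y hxy
      rw [hB, hB] at hxy
      obtain ⟨⟨c, hc⟩, h1⟩ := IsLocalization.exists_of_eq (M := n.primeCompl) hxy
      obtain ⟨c, rfl⟩ := hφ c
      obtain ⟨s, hs, h2⟩ := h (c * (x - y)) (by simp at h1 ⊢; linear_combination h1)
      exact ⟨⟨s * c, (n.comap φ).primeCompl.mul_mem hs hc⟩, by simp; linear_combination h2⟩
  have := FormallySmooth.of_isLocalization (R := B) (Rₘ := Localization.AtPrime n) (n.comap φ).primeCompl
  exact FormallySmooth.comp R B _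

end

section

open Algebra

open TensorProduct in
theorem unram_of_quot {R A F : Type*} [CommRing R] [CommRing A] [CommRing F] [Algebra R A] [Algebra A F] [Algebra R F]
    [IsScalarTower R A F] [FiniteType R A] [FormallyUnramified R F] (hs : Function.Surjective (algebraMap A F)) (I : Ideal R)
    (hI : RingHom.ker (algebraMap A F) = I.map (algebraMap R A)) (n : Ideal A) [n.IsPrime]
    (hn : RingHom.ker (algebraMap A F) ≤ n) : IsUnramifiedAt R n := by
  have hD : ∀ x ∈ RingHom.ker (algebraMap A F), (1 : F) ⊗ₜ[A] KaehlerDifferential.D R A x = 0 := by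
    intro x hx
    have hx' := hx
    rw [hI, Ideal.map] at hx
    induction hx using Submodule.span_induction with
    | mem x h =>
      obtain ⟨r, hr, rfl⟩ := h
      simp
    | zero => simp
    | add x y hx hy h1 h2 =>
      rw [map_add, TensorProduct.tmul_add, h1 (hI ▸ hx), h2 (hI ▸ hy), add_zero]
    | smul a x hx h =>
      have hx : x ∈ RingHom.ker (algebraMap A F) := hI ▸ hx
      have hx0 : algebraMap A F x = 0 := hx
      rw [smul_eq_mul, Derivation.leibniz, TensorProduct.tmul_add, TensorProduct.tmul_smul, h hx, smul_zero, zero_add,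
        ← TensorProduct.smul_tmul, Algebra.smul_def, hx0, zero_mul, TensorProduct.zero_tmul]
  have hz : ∀ t : F ⊗[A] Ω[A⁄R], t = 0 := by
    intro t
    obtain ⟨z, rfl⟩ := (KaehlerDifferential.exact_kerCotangentToTensor_mapBaseChange R A F hs t).1 (Subsingleton.elim _ _)
    obtain ⟨z, rfl⟩ := Ideal.toCotangent_surjective _ z
    rw [KaehlerDifferential.kerCotangentToTensor_toCotangent]
    exact hD _ z.2
  have hle : (⊤ : Submodule A (Ω[A⁄R])) ≤ RingHom.ker (algebraMap A F) • ⊤ := by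
    intro ω _
    let e : (A ⧸ RingHom.ker (algebraMap A F)) ≃ₐ[A] F := Ideal.quotientKerAlgEquivOfSurjective (f := Algebra.ofId A F) hs
    have : ω ∈ LinearMap.ker (TensorProduct.mk A (A ⧸ RingHom.ker (algebraMap A F)) (Ω[A⁄R]) 1) := by
      rw [LinearMap.mem_ker]
      apply (TensorProduct.congr e.toLinearEquiv (LinearEquiv.refl A (Ω[A⁄R]))).injective
      rw [map_zero]
      exact hz _
    rwa [LinearMap.ker_tensorProductMk] at this
  obtain ⟨r, hr, h⟩ := Submodule.exists_sub_one_mem_and_smul_eq_zero_of_fg_of_le_smul _ _ Module.Finite.fg_top hle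
  have hrn : r ∉ n := fun hc => Ideal.IsPrime.ne_top ‹_› ((Ideal.eq_top_iff_one n).2 (by
    simpa using sub_mem hc (hn hr)))
  change (⟨n, inferInstance⟩ : PrimeSpectrum A) ∈ unramifiedLocus R A
  rw [unramifiedLocus_eq_compl_support, Set.mem_compl_iff, Module.notMem_support_iff']
  exact fun m => ⟨r, hrn, h m trivial⟩

/-- dimension of components under localization -/
theorem dim_quot_of_away (k : Type*) {A A' : Type*} [Field k] [CommRing A] [CommRing A'] [Algebra k A] [FiniteType k A]
    [Algebra k A'] [Algebra A A'] [IsScalarTower k A A'] (f : A) [IsLocalization.Away f A'] (q : Ideal A') [q.IsPrime] :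
    ringKrullDim (A' ⧸ q) = ringKrullDim (A ⧸ q.comap (algebraMap A A')) := by
  have : FiniteType A A' := IsLocalization.finiteType_of_monoid_fg (Submonoid.powers f) A'
  have : FiniteType k A' := .trans (S := A) inferInstance inferInstance
  have hinj : Function.Injective (algebraMap (A ⧸ q.comap (algebraMap A A')) (A' ⧸ q)) :=
    Ideal.algebraMap_quotient_injective
  have : IsScalarTower k (A ⧸ q.comap (algebraMap A A')) (A' ⧸ q) := .of_algebraMap_eq fun x => by
    rw [IsScalarTower.algebraMap_apply k A' (A' ⧸ q), IsScalarTower.algebraMap_apply k A A']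
    rfl
  have : Algebra.IsAlgebraic (A ⧸ q.comap (algebraMap A A')) (A' ⧸ q) := by
    refine ⟨fun x => ?_⟩
    obtain ⟨x, rfl⟩ := Ideal.Quotient.mk_surjective x
    obtain ⟨⟨a, s⟩, h⟩ := IsLocalization.surj (Submonoid.powers f) x
    simp only at h
    refine ⟨.C (Ideal.Quotient.mk _ s.1) * .X - .C (Ideal.Quotient.mk _ a), ?_, ?_⟩
    · intro h0
      have h1 := congrArg (fun p => p.coeff 1) h0
      simp [Polynomial.coeff_C, Ideal.Quotient.eq_zero_iff_mem] at h1
      exact Ideal.IsPrime.ne_top ‹_› (Ideal.eq_top_of_isUnit_mem _ h1 (IsLocalization.map_units A' s))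
    · have := congrArg (Ideal.Quotient.mk q) h
      rw [map_mul] at this
      simp only [map_sub, map_mul, Polynomial.aeval_C, Polynomial.aeval_X, sub_eq_zero]
      rw [mul_comm]
      exact this
  rw [dim_eq_trdeg' k hinj, dim_eq_trdeg k]

theorem comap_minimal_of_loc {A A' : Type*} [CommRing A] [CommRing A'] [Algebra A A'] (M : Submonoid A)
    [IsLocalization M A'] (q : Ideal A') (hq : q ∈ minimalPrimes A') : q.comap (algebraMap A A') ∈ minimalPrimes A := by
  have := hq.1.1
  have := IsLocalization.minimalPrimes_map M A' (⊥ : Ideal A)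
  rw [Ideal.map_bot] at this
  have h2 : q ∈ (⊥ : Ideal A').minimalPrimes := hq
  rw [this] at h2
  exact h2

end

section

open Algebra

attribute [local instance] MvPolynomial.algebraMvPolynomial in
theorem etale_mvPolynomial (σ P R : Type*) [CommRing P] [CommRing R] [Algebra P R] [Etale P R] :
    Etale (MvPolynomial σ P) (MvPolynomial σ R) :=
  Etale.of_equiv (Algebra.IsPushout.equiv P (MvPolynomial σ P) R (MvPolynomial σ R))

attribute [local instance] MvPolynomial.algebraMvPolynomial in
theorem core {k R κ A F : Type*} [Field k] [CommRing R] [Field κ] [CommRing A] [CommRing F] {d r : ℕ}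
    [Algebra k R] [Algebra (MvPolynomial (Fin d) k) R] [IsScalarTower k (MvPolynomial (Fin d) k) R]
    [Etale (MvPolynomial (Fin d) k) R] [Algebra R κ] (hκ : Function.Surjective (algebraMap R κ))
    [Algebra R A] [FiniteType R A] [Algebra k A] [IsScalarTower k R A]
    [Algebra A F] [Algebra κ F] [Algebra R F] [IsScalarTower R A F] [IsScalarTower R κ F]
    [Algebra (MvPolynomial (Fin r) κ) F] [IsScalarTower κ (MvPolynomial (Fin r) κ) F] [Etale (MvPolynomial (Fin r) κ) F]
    (hs : Function.Surjective (algebraMap A F))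
    (hker : RingHom.ker (algebraMap A F) = (RingHom.ker (algebraMap R κ)).map (algebraMap R A))
    (n : Ideal A) [n.IsPrime] (hn : RingHom.ker (algebraMap A F) ≤ n)
    (hX : ∀ q ∈ minimalPrimes A, ((d + r : ℕ) : WithBot ℕ∞) ≤ ringKrullDim (A ⧸ q)) : IsSmoothAt R n := by
  choose a ha using fun i : Fin r => hs (algebraMap (MvPolynomial (Fin r) κ) F (.X i))
  let alg1 : Algebra (MvPolynomial (Fin r) R) A := (MvPolynomial.aeval (R := R) a).toAlgebra
  have t1 : IsScalarTower R (MvPolynomial (Fin r) R) A := .of_algebraMap_eq' (MvPolynomial.aeval (R := R) a).comp_algebraMap.symm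
  let alg2 : Algebra (MvPolynomial (Fin r) R) F := ((algebraMap A F).comp (algebraMap (MvPolynomial (Fin r) R) A)).toAlgebra
  have t2 : IsScalarTower (MvPolynomial (Fin r) R) A F := .of_algebraMap_eq' rfl
  have t3 : IsScalarTower (MvPolynomial (Fin r) R) (MvPolynomial (Fin r) κ) F := .of_algebraMap_eq' (by
    apply MvPolynomial.ringHom_ext
    · intro x
      have h1 : algebraMap (MvPolynomial (Fin r) R) F (.C x) = algebraMap R F x := by
        rw [IsScalarTower.algebraMap_apply _ A F, ← MvPolynomial.algebraMap_eq, ← IsScalarTower.algebraMap_apply R _ A,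
          ← IsScalarTower.algebraMap_apply]
      rw [h1, RingHom.comp_apply]
      have h2 : algebraMap (MvPolynomial (Fin r) R) (MvPolynomial (Fin r) κ) (.C x) = algebraMap κ _ (algebraMap R κ x) := by
        rw [MvPolynomial.algebraMap_def]; simp
      rw [h2, ← IsScalarTower.algebraMap_apply, ← IsScalarTower.algebraMap_apply]
    · intro i
      have h1 : algebraMap (MvPolynomial (Fin r) R) A (.X i) = a i := by
        change MvPolynomial.aeval (R := R) a (.X i) = _
        simp
      have h2 : algebraMap (MvPolynomial (Fin r) R) (MvPolynomial (Fin r) κ) (.X i) = .X i := by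
        rw [MvPolynomial.algebraMap_def]; simp
      rw [RingHom.comp_apply, h2, IsScalarTower.algebraMap_apply _ A F, h1, ha])
  have u1 : FormallyUnramified (MvPolynomial (Fin r) R) (MvPolynomial (Fin r) κ) :=
    .of_surjective (Algebra.ofId _ _) (MvPolynomial.map_surjective _ hκ)
  have u2 : FormallyUnramified (MvPolynomial (Fin r) R) F := .comp _ (MvPolynomial (Fin r) κ) F
  have : FiniteType (MvPolynomial (Fin r) R) A := .of_restrictScalars_finiteType R _ _
  have u3 : IsUnramifiedAt (MvPolynomial (Fin r) R) n := unram_of_quot hs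
    ((RingHom.ker (algebraMap R κ)).map (algebraMap R _)) (by
      rw [Ideal.map_map, ← IsScalarTower.algebraMap_eq]; exact hker) n hn
  obtain ⟨f, hf, P, φ, hφ⟩ := IsUnramifiedAt.exists_hasStandardEtaleSurjectionOn (R := MvPolynomial (Fin r) R) n
  have e1 := etale_mvPolynomial (Fin r) (MvPolynomial (Fin d) k) R
  let alg3 : Algebra (MvPolynomial (Fin r) (MvPolynomial (Fin d) k)) P.Ring :=
    ((algebraMap (MvPolynomial (Fin r) R) P.Ring).comp (algebraMap _ (MvPolynomial (Fin r) R))).toAlgebra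
  have t4 : IsScalarTower (MvPolynomial (Fin r) (MvPolynomial (Fin d) k)) (MvPolynomial (Fin r) R) P.Ring :=
    .of_algebraMap_eq' rfl
  have e2 : Etale (MvPolynomial (Fin r) (MvPolynomial (Fin d) k)) P.Ring := .comp _ (MvPolynomial (Fin r) R) _
  let n' : Ideal (Localization.Away f) := n.map (algebraMap A (Localization.Away f))
  have hdis : Disjoint (Submonoid.powers f : Set A) (n : Set A) :=
    (Ideal.disjoint_powers_iff_notMem_of_isPrime _).mpr hf
  have hn' : n'.IsPrime := IsLocalization.isPrime_of_isPrime_disjoint (.powers f) _ _ ‹_› hdis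
  have ft1 : FiniteType k R := .trans (S := MvPolynomial (Fin d) k) inferInstance inferInstance
  have ft2 : FiniteType k A := .trans (S := R) inferInstance inferInstance
  have hk := ker_locally_zero (P := MvPolynomial (Fin r) (MvPolynomial (Fin d) k)) (B := P.Ring) (d + r) (by
    rw [MvPolynomial.ringKrullDim_of_isNoetherianRing, MvPolynomial.ringKrullDim_of_isNoetherianRing]; simp)
    φ.toRingHom hφ n' (fun q hq => by
      have := hq.1.1
      rw [dim_quot_of_away k f q]
      exact hX _ (comap_minimal_of_loc (.powers f) q hq))
  let alg4 : Algebra R P.Ring :=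
    ((algebraMap (MvPolynomial (Fin r) R) P.Ring).comp (algebraMap R (MvPolynomial (Fin r) R))).toAlgebra
  have t5 : IsScalarTower R (MvPolynomial (Fin r) R) P.Ring := .of_algebraMap_eq' rfl
  have s1 : FormallySmooth R P.Ring := .comp _ (MvPolynomial (Fin r) R) _
  have s2 : IsSmoothAt R n' := formallySmooth_of_cmp (φ.restrictScalars R) hφ n' hk
  have s3 : (⟨n', hn'⟩ : PrimeSpectrum _) ∈ smoothLocus R (Localization.Away f) := s2
  rw [← Algebra.smoothLocus_comap_of_isLocalization f] at s3
  have s4 : PrimeSpectrum.comap (algebraMap A (Localization.Away f)) ⟨n', hn'⟩ = ⟨n, inferInstance⟩ :=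
    PrimeSpectrum.ext (IsLocalization.under_map_of_isPrime_disjoint (.powers f) _ ‹_› hdis)
  rw [Set.mem_preimage, s4] at s3
  exact s3

end

section

open Algebra

theorem mainAlg {k R κ A F : Type*} [Field k] [CommRing R] [Field κ] [CommRing A] [CommRing F]
    [Algebra k R] [Smooth k R] [Algebra R κ] (hκ : Function.Surjective (algebraMap R κ))
    [Algebra R A] [FiniteType R A] [Algebra k A] [IsScalarTower k R A]
    [Algebra A F] [Algebra κ F] [Algebra R F] [IsScalarTower R A F] [IsScalarTower R κ F]
    [Smooth κ F] (hs : Function.Surjective (algebraMap A F))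
    (hker : RingHom.ker (algebraMap A F) = (RingHom.ker (algebraMap R κ)).map (algebraMap R A))
    (n : Ideal A) [n.IsPrime] (hn : RingHom.ker (algebraMap A F) ≤ n) (D dY : WithBot ℕ∞)
    (hY : ringKrullDim R ≤ dY) (hF : ∀ q ∈ minimalPrimes F, ringKrullDim (F ⧸ q) + dY ≤ D)
    (hX : ∀ q ∈ minimalPrimes A, D ≤ ringKrullDim (A ⧸ q)) : IsSmoothAt R n := by
  have ft2 : FiniteType k A := .trans (S := R) inferInstance inferInstance
  have hmax : (RingHom.ker (algebraMap R κ)).IsMaximal := RingHom.ker_isMaximal_of_surjective _ hκ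
  have hmn : n.comap (algebraMap R A) = RingHom.ker (algebraMap R κ) := by
    refine (hmax.eq_of_le (Ideal.IsPrime.ne_top inferInstance) ?_).symm
    rw [← Ideal.map_le_iff_le_comap, ← hker]; exact hn
  have hnF : (n.map (algebraMap A F)).IsPrime := Ideal.map_isPrime_of_surjective hs hn
  have hnFc : (n.map (algebraMap A F)).comap (algebraMap A F) = n := by
    rw [Ideal.comap_map_of_surjective _ hs, ← RingHom.ker_eq_comap_bot]; exact sup_eq_left.2 hn
  obtain ⟨f, hf, d, a1, a2, a3⟩ := IsSmoothAt.exists_isStandardEtale_mvPolynomial (R := k) (p := RingHom.ker (algebraMap R κ))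
  obtain ⟨g', hg', r, b1, b2, b3⟩ := IsSmoothAt.exists_isStandardEtale_mvPolynomial (R := κ) (p := n.map (algebraMap A F))
  obtain ⟨g, rfl⟩ := hs g'
  have hgn : g ∉ n := fun h => hg' (Ideal.mem_map_of_mem _ h)
  have hfn : algebraMap R A f ∉ n := fun h => hf (hmn ▸ h)
  set h := algebraMap R A f * g with hh
  have hhn : h ∉ n := fun hc => (Ideal.IsPrime.mem_or_mem ‹_› hc).elim hfn hgn
  let R' := Localization.Away f
  let A' := Localization.Away h
  let F' := Localization.Away (algebraMap A F g)
  have uh : IsUnit (algebraMap A A' h) := IsLocalization.Away.algebraMap_isUnit h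
  have ufg : IsUnit (algebraMap A A' (algebraMap R A f)) ∧ IsUnit (algebraMap A A' g) := by
    rw [← IsUnit.mul_iff]
    have e : algebraMap A A' h = algebraMap A A' (algebraMap R A f) * algebraMap A A' g := map_mul _ _ _
    rw [← e]; exact uh
  have ufR : IsUnit (algebraMap R κ f) := isUnit_iff_ne_zero.2 hf
  let ρ : R' →+* κ := IsLocalization.Away.lift f ufR
  let α : R' →+* A' := IsLocalization.Away.lift (g := (algebraMap A A').comp (algebraMap R A)) f ufg.1
  have uhF : IsUnit (((algebraMap F F').comp (algebraMap A F)) h) := by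
    rw [hh, map_mul]
    refine IsUnit.mul ?_ (IsLocalization.Away.algebraMap_isUnit (algebraMap A F g))
    rw [RingHom.comp_apply, ← IsScalarTower.algebraMap_apply R A F, IsScalarTower.algebraMap_apply R κ F]
    exact (ufR.map _).map _
  let β : A' →+* F' := IsLocalization.Away.lift h uhF
  let _ : Algebra R' κ := ρ.toAlgebra
  let _ : Algebra R' A' := α.toAlgebra
  let _ : Algebra A' F' := β.toAlgebra
  let _ : Algebra R' F' := (β.comp α).toAlgebra
  have hρ : ∀ x, algebraMap R' κ (algebraMap R R' x) = algebraMap R κ x := IsLocalization.Away.lift_eq f ufR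
  have hα : ∀ x, algebraMap R' A' (algebraMap R R' x) = algebraMap A A' (algebraMap R A x) :=
    IsLocalization.Away.lift_eq (g := (algebraMap A A').comp (algebraMap R A)) f ufg.1
  have hβ : ∀ x, algebraMap A' F' (algebraMap A A' x) = algebraMap F F' (algebraMap A F x) :=
    IsLocalization.Away.lift_eq (g := (algebraMap F F').comp (algebraMap A F)) h uhF
  have t1 : IsScalarTower R' A' F' := .of_algebraMap_eq' rfl
  have t2 : IsScalarTower R' κ F' := .of_algebraMap_eq' (by
    refine IsLocalization.ringHom_ext (.powers f) ?_
    ext x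
    simp only [RingHom.comp_apply]
    rw [hρ, IsScalarTower.algebraMap_apply R' A' F', hα, hβ, ← IsScalarTower.algebraMap_apply R A F,
      IsScalarTower.algebraMap_apply R κ F, ← IsScalarTower.algebraMap_apply κ F F'])
  have t3 : IsScalarTower R R' A' := .of_algebraMap_eq fun x => by
    rw [hα, ← IsScalarTower.algebraMap_apply]
  have t4 : IsScalarTower k R' A' := .of_algebraMap_eq fun x => by
    rw [IsScalarTower.algebraMap_apply k R R', hα, ← IsScalarTower.algebraMap_apply k R A, ← IsScalarTower.algebraMap_apply k A A']
  have ft3 : FiniteType A A' := IsLocalization.finiteType_of_monoid_fg (Submonoid.powers h) A'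
  have ft4 : FiniteType R A' := .trans (S := A) inferInstance inferInstance
  have ft5 : FiniteType R' A' := .of_restrictScalars_finiteType R R' A'
  have hκ' : Function.Surjective (algebraMap R' κ) := fun x => by
    obtain ⟨y, rfl⟩ := hκ x
    exact ⟨algebraMap R R' y, hρ y⟩
  have hs' : Function.Surjective (algebraMap A' F') := fun x => by
    obtain ⟨⟨y, s, m, rfl⟩, hxy⟩ := IsLocalization.surj (Submonoid.powers (algebraMap A F g)) x
    simp only at hxy
    obtain ⟨y, rfl⟩ := hs y
    obtain ⟨u, hu⟩ := ufg.2
    refine ⟨algebraMap A A' y * (↑u⁻¹ : A') ^ m, ?_⟩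
    have h1 : IsUnit (algebraMap F F' (algebraMap A F g ^ m)) := IsLocalization.map_units F' (⟨algebraMap A F g ^ m, m, rfl⟩ : Submonoid.powers (algebraMap A F g))
    refine h1.mul_right_cancel ?_
    rw [hxy, ← hβ, ← map_pow, ← hβ, ← map_mul]
    congr 1
    rw [map_pow, ← hu, mul_assoc, ← mul_pow]
    simp
  have hker' : RingHom.ker (algebraMap A' F') = (RingHom.ker (algebraMap R' κ)).map (algebraMap R' A') := by
    apply le_antisymm
    · intro x hx
      obtain ⟨⟨y, s⟩, hxy⟩ := IsLocalization.surj (Submonoid.powers h) x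
      simp only at hxy
      have hy : algebraMap F F' (algebraMap A F y) = 0 := by
        rw [← hβ, ← hxy, map_mul, show algebraMap A' F' x = 0 from hx, zero_mul]
      obtain ⟨⟨c, m, rfl⟩, hc⟩ := (IsLocalization.map_eq_zero_iff (Submonoid.powers (algebraMap A F g)) F' _).1 hy
      have h1 : g ^ m * y ∈ RingHom.ker (algebraMap A F) := by
        rw [RingHom.mem_ker, map_mul, map_pow]; exact hc
      rw [hker] at h1
      have h2 : algebraMap A A' (g ^ m * y) ∈ (RingHom.ker (algebraMap R' κ)).map (algebraMap R' A') := by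
        have h3 := Ideal.mem_map_of_mem (algebraMap A A') h1
        rw [Ideal.map_map] at h3
        refine (Ideal.map_le_iff_le_comap.2 ?_) h3
        intro z hz
        rw [Ideal.mem_comap, RingHom.comp_apply, ← hα]
        refine Ideal.mem_map_of_mem _ ?_
        rw [RingHom.mem_ker, hρ]; exact hz
      rw [map_mul, map_pow, ← hxy] at h2
      have h3 := (Ideal.unit_mul_mem_iff_mem _ (ufg.2.pow m)).1 h2
      rwa [Ideal.mul_unit_mem_iff_mem _ (IsLocalization.map_units A' s)] at h3
    · rw [Ideal.map_le_iff_le_comap]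
      intro z hz
      rw [Ideal.mem_comap, RingHom.mem_ker, ← IsScalarTower.algebraMap_apply, IsScalarTower.algebraMap_apply R' κ F',
        show algebraMap R' κ z = 0 from hz, map_zero]
  let n' : Ideal A' := n.map (algebraMap A A')
  have hdis : Disjoint (Submonoid.powers h : Set A) (n : Set A) :=
    (Ideal.disjoint_powers_iff_notMem_of_isPrime _).mpr hhn
  have hn' : n'.IsPrime := IsLocalization.isPrime_of_isPrime_disjoint (.powers h) _ _ ‹_› hdis
  have hn'' : RingHom.ker (algebraMap A' F') ≤ n' := by
    rw [hker', Ideal.map_le_iff_le_comap]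
    intro z hz
    obtain ⟨⟨y, s⟩, hxy⟩ := IsLocalization.surj (Submonoid.powers f) z
    simp only at hxy
    have h1 : algebraMap R κ y = 0 := by
      rw [← hρ, ← hxy, map_mul, show algebraMap R' κ z = 0 from hz, zero_mul]
    have h2 : algebraMap R A y ∈ n := by
      change y ∈ n.comap (algebraMap R A)
      rw [hmn]; exact h1
    rw [Ideal.mem_comap]
    rw [← Ideal.mul_unit_mem_iff_mem _ ((IsLocalization.map_units R' s).map (algebraMap R' A')), ← map_mul, hxy, hα]
    exact Ideal.mem_map_of_mem _ h2
  have hd : (d : WithBot ℕ∞) ≤ dY := by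
    have : Nontrivial R' := (algebraMap R' κ).domain_nontrivial
    obtain ⟨p, hp⟩ := Ideal.nonempty_minimalPrimes (bot_ne_top : (⊥ : Ideal R') ≠ ⊤)
    refine (le_dim_of_etale (k := k) p hp).trans ((ringKrullDim_quotient_le p).trans (le_trans ?_ hY))
    exact dim_le_of_qf (R := R) (S := R')
  have hr : (r : WithBot ℕ∞) + dY ≤ D := by
    have : Nontrivial F' := by
      by_contra hc
      rw [not_nontrivial_iff_subsingleton] at hc
      apply hn'.ne_top
      rw [Ideal.eq_top_iff_one]
      exact hn'' (Subsingleton.elim _ _)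
    obtain ⟨q, hq⟩ := Ideal.nonempty_minimalPrimes (bot_ne_top : (⊥ : Ideal F') ≠ ⊤)
    have := hq.1.1
    have h1 := le_dim_of_etale (k := κ) (n := r) q hq
    rw [dim_quot_of_away κ (algebraMap A F g) q] at h1
    exact (add_le_add_left h1 dY).trans (hF _ (comap_minimal_of_loc (.powers (algebraMap A F g)) q hq))
  have s1 : IsSmoothAt R' n' := core (k := k) (d := d) (r := r) hκ' hs' hker' n' hn'' (fun q hq => by
    have := hq.1.1
    rw [dim_quot_of_away k h q]
    refine le_trans ?_ (hX _ (comap_minimal_of_loc (.powers h) q hq))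
    refine le_trans ?_ hr
    rw [Nat.add_comm, Nat.cast_add]
    exact add_le_add_right hd _)
  have s0 : FormallySmooth R R' := FormallySmooth.of_isLocalization (.powers f)
  have s2 : IsSmoothAt R n' := FormallySmooth.comp R R' _
  have s3 : (⟨n', hn'⟩ : PrimeSpectrum _) ∈ smoothLocus R A' := s2
  rw [← Algebra.smoothLocus_comap_of_isLocalization h] at s3
  have s4 : PrimeSpectrum.comap (algebraMap A A') ⟨n', hn'⟩ = ⟨n, inferInstance⟩ :=
    PrimeSpectrum.ext (IsLocalization.under_map_of_isPrime_disjoint (.powers h) _ ‹_› hdis)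
  rw [Set.mem_preimage, s4] at s3
  exact s3

end

section

open TopologicalSpace Topology


theorem top_dim_le_of_cover {T : Type*} [TopologicalSpace T] (d : WithBot ℕ∞)
    (h : ∀ z : T, ∃ (U : Type u) (_ : TopologicalSpace U) (f : U → T), IsOpenEmbedding f ∧ z ∈ Set.range f ∧ topologicalKrullDim U ≤ d) :
    topologicalKrullDim T ≤ d := by
  cases isEmpty_or_nonempty (IrreducibleCloseds T) with
  | inl he => unfold topologicalKrullDim; rw [Order.krullDim_eq_bot]; exact bot_le
  | inr he =>
    unfold topologicalKrullDim
    rw [Order.krullDim_eq_iSup_coheight]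
    refine iSup_le fun Z => ?_
    obtain ⟨z, hz⟩ := Z.isIrreducible.nonempty
    obtain ⟨U, _, f, hf, ⟨u, rfl⟩, hd⟩ := h z
    refine le_trans ?_ hd
    obtain ⟨W, hW⟩ : ∃ W : IrreducibleCloseds U, IrreducibleCloseds.map f hf.continuous W = Z := by
      obtain ⟨W, hW⟩ := (IrreducibleCloseds.orderIsoOfIsOpenEmbedding f hf).surjective ⟨Z, u, hz⟩
      exact ⟨W, congrArg Subtype.val hW⟩
    rw [← hW, hf.coheight_map]
    exact Order.coheight_le_krullDim W

theorem quot_isOpenEmbedding {A T : Type*} [CommRing A] [TopologicalSpace T] (φ : PrimeSpectrum A → T) (hφ : IsOpenEmbedding φ)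
    (q : PrimeSpectrum A) : ∃ ψ : PrimeSpectrum (A ⧸ q.asIdeal) → closure {φ q}, IsOpenEmbedding ψ ∧
      ∀ c, c.1 ∈ Set.range φ → c ∈ Set.range ψ := by
  have h1 : IsClosedEmbedding (PrimeSpectrum.comap (Ideal.Quotient.mk q.asIdeal)) :=
    PrimeSpectrum.isClosedEmbedding_comap_of_surjective _ _ Ideal.Quotient.mk_surjective
  have h2 : Set.range (PrimeSpectrum.comap (Ideal.Quotient.mk q.asIdeal)) = PrimeSpectrum.zeroLocus q.asIdeal := by
    rw [range_comap_of_surjective _ _ Ideal.Quotient.mk_surjective, Ideal.mk_ker]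
  have h3 : ∀ p, p ∈ Set.range (PrimeSpectrum.comap (Ideal.Quotient.mk q.asIdeal)) ↔ φ p ∈ closure {φ q} := by
    intro p
    rw [h2, ← specializes_iff_mem_closure, hφ.isInducing.specializes_iff, ← PrimeSpectrum.le_iff_specializes]
    exact Iff.rfl
  have h4 : ∀ p, (φ ∘ PrimeSpectrum.comap (Ideal.Quotient.mk q.asIdeal)) p ∈ closure {φ q} := fun p => (h3 _).1 ⟨p, rfl⟩
  have h5 := (hφ.isEmbedding.comp h1.isEmbedding).codRestrict _ h4
  have h6 : ∀ c : closure {φ q}, c.1 ∈ Set.range φ ↔ c ∈ Set.range (Set.codRestrict _ _ h4) := by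
    rintro ⟨c, hc⟩
    constructor
    · rintro ⟨p, rfl⟩
      obtain ⟨p', rfl⟩ := (h3 p).2 hc
      exact ⟨p', rfl⟩
    · rintro ⟨p, hp⟩
      exact ⟨_, congrArg Subtype.val hp⟩
  refine ⟨_, ⟨h5, ?_⟩, fun c => (h6 c).1⟩
  convert hφ.isOpen_range.preimage (continuous_subtype_val (p := fun c => c ∈ closure {φ q})) using 1
  ext c
  exact (h6 c).symm

theorem closure_mem_irreducibleComponents {A T : Type*} [CommRing A] [TopologicalSpace T] [QuasiSober T] (φ : PrimeSpectrum A → T) (hφ : IsOpenEmbedding φ)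
    (q : PrimeSpectrum A) (hq : q.asIdeal ∈ minimalPrimes A) : closure {φ q} ∈ irreducibleComponents T := by
  obtain ⟨Z, hZ, h⟩ := exists_mem_irreducibleComponents_subset_of_isIrreducible _ (isIrreducible_singleton (x := φ q)).closure
  obtain ⟨z, hz⟩ := QuasiSober.sober hZ.1 (isClosed_of_mem_irreducibleComponents _ hZ)
  have h1 : z ⤳ φ q := by
    rw [specializes_iff_mem_closure, hz.def]; exact h (subset_closure rfl)
  obtain ⟨p, rfl⟩ := h1.mem_open hφ.isOpen_range ⟨q, rfl⟩
  rw [hφ.isInducing.specializes_iff, ← PrimeSpectrum.le_iff_specializes] at h1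
  have : p = q := le_antisymm h1 (hq.2 ⟨p.2, bot_le⟩ h1)
  rw [← this, hz.def]; exact hZ

end

section

open AlgebraicGeometry CategoryTheory Limits Topology


noncomputable def structHom {k : Type u} [Field k] {X : Scheme.{u}} (sX : X ⟶ Spec (CommRingCat.of k)) (V : X.Opens) :
    k →+* Γ(X, V) :=
  ((Scheme.ΓSpecIso (CommRingCat.of k)).inv ≫ sX.appLE ⊤ V (show V ≤ sX ⁻¹ᵁ ⊤ from fun _ _ => trivial)).hom

theorem structHom_map {k : Type u} [Field k] {X : Scheme.{u}} (sX : X ⟶ Spec (CommRingCat.of k)) {V W : X.Opens}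
    (h : W ≤ V) : (X.presheaf.map (homOfLE h).op).hom.comp (structHom sX V) = structHom sX W := by
  unfold structHom
  rw [← CommRingCat.hom_comp, Category.assoc, Scheme.Hom.appLE_map]

theorem structHom_comp {k : Type u} [Field k] {X Y : Scheme.{u}} (f : X ⟶ Y) (sY : Y ⟶ Spec (CommRingCat.of k))
    (U : Y.Opens) (V : X.Opens)
    (h : V ≤ f ⁻¹ᵁ U) : (f.appLE U V h).hom.comp (structHom sY U) = structHom (f ≫ sY) V := by
  unfold structHom
  rw [← CommRingCat.hom_comp, Category.assoc, Scheme.Hom.appLE_comp_appLE]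

theorem structHom_finiteType {k : Type u} [Field k] {X : Scheme.{u}} (sX : X ⟶ Spec (CommRingCat.of k))
    [LocallyOfFiniteType sX] {V : X.Opens} (hV : IsAffineOpen V) : (structHom sX V).FiniteType := by
  unfold structHom
  rw [CommRingCat.hom_comp]
  refine RingHom.FiniteType.comp (sX.finiteType_appLE (isAffineOpen_top _) hV _) ?_
  exact RingHom.FiniteType.of_surjective _
    (ConcreteCategory.bijective_of_isIso (Scheme.ΓSpecIso (CommRingCat.of k)).inv).2

theorem structHom_smooth {k : Type u} [Field k] {X : Scheme.{u}} (sX : X ⟶ Spec (CommRingCat.of k))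
    [Smooth sX] {V : X.Opens} (hV : IsAffineOpen V) : (structHom sX V).Smooth := by
  unfold structHom
  exact RingHom.Smooth.propertyIsLocal.respectsIso.2 _ (Scheme.ΓSpecIso (CommRingCat.of k)).symm.commRingCatIsoToRingEquiv
    (sX.smooth_appLE (isAffineOpen_top _) hV _)

theorem dim_quot_basicOpen {k : Type u} [Field k] {X : Scheme.{u}} (sX : X ⟶ Spec (CommRingCat.of k))
    [LocallyOfFiniteType sX] {V : X.Opens} (hV : IsAffineOpen V) (g : Γ(X, V)) (W : X.Opens) (hWe : W = X.basicOpen g)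
    (hW : IsAffineOpen W)
    (q : PrimeSpectrum Γ(X, V)) (q' : PrimeSpectrum Γ(X, W)) (h : hV.fromSpec q = hW.fromSpec q') :
    ringKrullDim (Γ(X, V) ⧸ q.asIdeal) = ringKrullDim (Γ(X, W) ⧸ q'.asIdeal) := by
  subst hWe
  have hle : X.basicOpen g ≤ V := X.basicOpen_le g
  have hq : q = Spec.map (X.presheaf.map (homOfLE hle).op) q' := by
    apply hV.fromSpec.isOpenEmbedding.injective
    have h2 := congrArg (fun φ => φ.base q') (IsAffineOpen.map_fromSpec hV hW (homOfLE hle).op)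
    exact h.trans h2.symm
  let := (structHom sX V).toAlgebra
  let := (structHom sX (X.basicOpen g)).toAlgebra
  have : IsScalarTower k Γ(X, V) Γ(X, X.basicOpen g) := .of_algebraMap_eq' (structHom_map sX hle).symm
  have : Algebra.FiniteType k Γ(X, V) := structHom_finiteType sX hV
  have := hV.isLocalization_basicOpen g
  rw [dim_quot_of_away k g q'.asIdeal, hq]
  rfl

theorem dim_indep {k : Type u} [Field k] {X : Scheme.{u}} (sX : X ⟶ Spec (CommRingCat.of k))
    [LocallyOfFiniteType sX] {V W : X.Opens} (hV : IsAffineOpen V) (hW : IsAffineOpen W)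
    (q : PrimeSpectrum Γ(X, V)) (q' : PrimeSpectrum Γ(X, W)) (h : hV.fromSpec q = hW.fromSpec q') :
    ringKrullDim (Γ(X, V) ⧸ q.asIdeal) = ringKrullDim (Γ(X, W) ⧸ q'.asIdeal) := by
  have h1 : hV.fromSpec q ∈ V := by rw [← SetLike.mem_coe, ← hV.range_fromSpec]; exact ⟨q, rfl⟩
  have h2 : hV.fromSpec q ∈ W := by rw [h, ← SetLike.mem_coe, ← hW.range_fromSpec]; exact ⟨q', rfl⟩
  obtain ⟨a, b, hab, ha⟩ := exists_basicOpen_le_affine_inter hV hW (hV.fromSpec q) ⟨h1, h2⟩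
  have hB : IsAffineOpen (X.basicOpen a) := hV.basicOpen a
  obtain ⟨p, hp⟩ : hV.fromSpec q ∈ Set.range hB.fromSpec := by rw [hB.range_fromSpec]; exact ha
  rw [dim_quot_basicOpen sX hV a _ rfl hB q p hp.symm, dim_quot_basicOpen sX hW b _ hab hB q' p (hp.trans h).symm]

theorem closure_dim_le {k : Type u} [Field k] {X : Scheme.{u}} (sX : X ⟶ Spec (CommRingCat.of k))
    [LocallyOfFiniteType sX] {V : X.Opens} (hV : IsAffineOpen V) (q : PrimeSpectrum Γ(X, V)) :
    topologicalKrullDim (closure {hV.fromSpec q} : Set X) ≤ ringKrullDim (Γ(X, V) ⧸ q.asIdeal) := by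
  refine top_dim_le_of_cover.{u} _ fun z => ?_
  obtain ⟨_, ⟨W, hW, rfl⟩, hzW, -⟩ :=
    X.isBasis_affineOpens.exists_subset_of_mem_open (Set.mem_univ z.1) isOpen_univ
  have hxW : hV.fromSpec q ∈ W := (specializes_iff_mem_closure.2 z.2).mem_open W.2 hzW
  have hW : IsAffineOpen W := hW
  obtain ⟨p, hp⟩ : hV.fromSpec q ∈ Set.range hW.fromSpec := by rw [hW.range_fromSpec]; exact hxW
  rw [dim_indep sX hV hW q p hp.symm]
  generalize hV.fromSpec q = x at *
  subst hp
  obtain ⟨ψ, hψ, hψ'⟩ := quot_isOpenEmbedding (A := Γ(X, W)) (T := X) hW.fromSpec hW.fromSpec.isOpenEmbedding p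
  refine ⟨_, _, ψ, hψ, hψ' z ?_, ?_⟩
  · have := hW.range_fromSpec
    erw [this]
    exact hzW
  · rw [PrimeSpectrum.topologicalKrullDim_eq_ringKrullDim]

theorem hX_lemma {k : Type u} [Field k] {X : Scheme.{u}} (sX : X ⟶ Spec (CommRingCat.of k))
    [LocallyOfFiniteType sX]
    (hXeq : ∀ C ∈ irreducibleComponents X, topologicalKrullDim C = topologicalKrullDim X)
    {V : X.Opens} (hV : IsAffineOpen V) (q : Ideal Γ(X, V)) (hq : q ∈ minimalPrimes Γ(X, V)) :
    topologicalKrullDim X ≤ ringKrullDim (Γ(X, V) ⧸ q) := by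
  have := closure_mem_irreducibleComponents (A := Γ(X, V)) (T := X) hV.fromSpec
    hV.fromSpec.isOpenEmbedding ⟨q, hq.1.1⟩ hq
  rw [← hXeq _ this]
  exact closure_dim_le sX hV _

end

section

open AlgebraicGeometry CategoryTheory Limits Topology


theorem fiber_chart {X Y : Scheme.{u}} (f : X ⟶ Y) {U : Y.Opens} (hU : IsAffineOpen U) {V : X.Opens} (hV : IsAffineOpen V)
    (hVU : V ≤ f ⁻¹ᵁ U) (y : Y) (hy : y ∈ U) (F : CommRingCat.{u}) (inl : Γ(X, V) ⟶ F) (inr : Y.residueField y ⟶ F)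
    (hp : IsPushout (f.appLE U V hVU) (Y.evaluation U y hy) inl inr) :
    ∃ j : Spec F ⟶ pullback f (Y.fromSpecResidueField y), IsOpenImmersion j ∧
      j ≫ pullback.snd f (Y.fromSpecResidueField y) = Spec.map inr := by
  have h1 := isPullback_SpecMap_of_isPushout _ _ _ _ hp
  have e1 : Spec.map (f.appLE U V hVU) ≫ hU.fromSpec = hV.fromSpec ≫ f :=
    IsAffineOpen.SpecMap_appLE_fromSpec f hU hV hVU
  have e2 : Spec.map (Y.evaluation U y hy) ≫ hU.fromSpec = Y.fromSpecResidueField y := by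
    rw [Scheme.fromSpecResidueField, Scheme.evaluation, Spec.map_comp, Category.assoc,
      ← hU.fromSpecStalk_eq_fromSpecStalk hy]
    rfl
  have h2 : IsPullback (Spec.map inl) (Spec.map inr) (hV.fromSpec ≫ f) (Y.fromSpecResidueField y) := by
    rw [← e1, ← e2]
    refine ⟨⟨by rw [← Category.assoc, h1.w, Category.assoc]⟩, ⟨PullbackCone.IsLimit.mk _ (fun s => h1.lift s.fst s.snd ?_) ?_ ?_ ?_⟩⟩
    · rw [← cancel_mono hU.fromSpec]; simpa using s.condition
    · intro s; simp
    · intro s; simp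
    · intro s m hm1 hm2
      apply h1.hom_ext <;> simp [hm1, hm2]
  have h3 : (Spec.map inl ≫ hV.fromSpec) ≫ f = Spec.map inr ≫ Y.fromSpecResidueField y := by
    rw [Category.assoc]; exact h2.w
  let j := pullback.lift (Spec.map inl ≫ hV.fromSpec) (Spec.map inr) h3
  have hj1 : j ≫ pullback.fst _ _ = Spec.map inl ≫ hV.fromSpec := pullback.lift_fst _ _ _
  have hj2 : j ≫ pullback.snd _ _ = Spec.map inr := pullback.lift_snd _ _ _
  have h4 : IsPullback j (Spec.map inl) (pullback.fst f (Y.fromSpecResidueField y)) hV.fromSpec := by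
    refine IsPullback.of_right (h₁₂ := pullback.snd f (Y.fromSpecResidueField y)) (h₂₂ := f)
      (v₁₃ := Y.fromSpecResidueField y) ?_ hj1 (IsPullback.of_hasPullback _ _).flip
    rw [hj2]
    exact h2.flip
  refine ⟨j, ?_, hj2⟩
  exact MorphismProperty.of_isPullback (P := @IsOpenImmersion) h4.flip inferInstance

theorem fiber_lemma {P : Scheme.{u}} {K : CommRingCat.{u}} (s : P ⟶ Spec K) (F : CommRingCat.{u}) (inr : K ⟶ F)
    (j : Spec F ⟶ P) [IsOpenImmersion j] (hj : j ≫ s = Spec.map inr) [Smooth s] (D dY : WithBot ℕ∞)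
    (h : ∀ C ∈ irreducibleComponents P, topologicalKrullDim C + dY = D) :
    inr.hom.Smooth ∧ ∀ q ∈ minimalPrimes F, ringKrullDim (F ⧸ q) + dY ≤ D := by
  constructor
  · rw [← HasRingHomProperty.Spec_iff (P := @Smooth), ← hj]
    infer_instance
  · intro q hq
    have hc := closure_mem_irreducibleComponents (A := F) (T := P) j j.isOpenEmbedding ⟨q, hq.1.1⟩ hq
    obtain ⟨ψ, hψ, -⟩ := quot_isOpenEmbedding (A := F) (T := P) j j.isOpenEmbedding ⟨q, hq.1.1⟩
    rw [← h _ hc, ← PrimeSpectrum.topologicalKrullDim_eq_ringKrullDim]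
    gcongr
    exact hψ.isInducing.topologicalKrullDim_le

theorem ker_inl {R A κ : Type*} [CommRing R] [CommRing A] [CommRing κ] [Algebra R A] [Algebra R κ]
    (hκ : Function.Surjective (algebraMap R κ)) :
    Function.Surjective (algebraMap A (TensorProduct R A κ)) ∧
    RingHom.ker (algebraMap A (TensorProduct R A κ)) = (RingHom.ker (algebraMap R κ)).map (algebraMap R A) := by
  constructor
  · intro x
    induction x with
    | zero => exact ⟨0, map_zero _⟩
    | tmul a b =>
      obtain ⟨r, rfl⟩ := hκ b
      refine ⟨r • a, ?_⟩
      rw [Algebra.TensorProduct.algebraMap_apply, Algebra.algebraMap_self_apply, TensorProduct.smul_tmul, Algebra.algebraMap_eq_smul_one]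
    | add x y hx hy =>
      obtain ⟨a, rfl⟩ := hx
      obtain ⟨b, rfl⟩ := hy
      exact ⟨a + b, map_add _ _ _⟩
  · apply le_antisymm
    · intro a ha
      let I := (RingHom.ker (algebraMap R κ)).map (algebraMap R A)
      let g : κ →+* A ⧸ I := (Ideal.Quotient.lift (RingHom.ker (algebraMap R κ)) ((Ideal.Quotient.mk I).comp (algebraMap R A))
        (fun r hr => Ideal.Quotient.eq_zero_iff_mem.2 (Ideal.mem_map_of_mem _ hr))).comp
        (RingHom.quotientKerEquivOfSurjective hκ).symm.toRingHom
      have hg : ∀ r, g (algebraMap R κ r) = algebraMap R (A ⧸ I) r := by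
        intro r
        have : (RingHom.quotientKerEquivOfSurjective hκ).symm (algebraMap R κ r) = Ideal.Quotient.mk _ r := by
          rw [RingEquiv.symm_apply_eq]; rfl
        simp only [g, RingHom.comp_apply, RingEquiv.toRingHom_eq_coe, RingHom.coe_coe, this]
        rfl
      let g' : κ →ₐ[R] A ⧸ I := { g with commutes' := hg }
      let l : TensorProduct R A κ →ₐ[R] A ⧸ I := Algebra.TensorProduct.lift (Ideal.Quotient.mkₐ R I) g' (fun _ _ => Commute.all _ _)
      have : l (algebraMap A (TensorProduct R A κ) a) = Ideal.Quotient.mk I a := by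
        rw [Algebra.TensorProduct.algebraMap_apply, Algebra.algebraMap_self_apply]
        simp [l]
      rw [RingHom.mem_ker] at ha
      rw [ha, map_zero] at this
      exact Ideal.Quotient.eq_zero_iff_mem.1 this.symm
    · rw [Ideal.map_le_iff_le_comap]
      intro r hr
      rw [RingHom.mem_ker] at hr
      let := Algebra.TensorProduct.rightAlgebra (R := R) (A := A) (B := κ)
      rw [Ideal.mem_comap, RingHom.mem_ker, ← IsScalarTower.algebraMap_apply, IsScalarTower.algebraMap_apply R κ, hr, map_zero]

end

section

open AlgebraicGeometry CategoryTheory Limits Topology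


theorem evaluation_surj {Y : Scheme.{u}} {U : Y.Opens} (hU : IsAffineOpen U) (y : Y) (hy : y ∈ U)
    (hc : IsClosed ({y} : Set Y)) : Function.Surjective (Y.evaluation U y hy).hom := by
  have e2 : Spec.map (Y.evaluation U y hy) ≫ hU.fromSpec = Y.fromSpecResidueField y := by
    rw [Scheme.fromSpecResidueField, Scheme.evaluation, Spec.map_comp, Category.assoc,
      ← hU.fromSpecStalk_eq_fromSpecStalk hy]
    rfl
  have h1 : IsClosedImmersion (Y.fromSpecResidueField y) := isClosed_singleton_iff_isClosedImmersion.1 hc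
  rw [← e2] at h1
  have h2 : IsClosedImmersion (Spec.map (Y.evaluation U y hy)) := IsClosedImmersion.of_comp _ hU.fromSpec
  have h3 := (IsClosedImmersion.isAffine_surjective_of_isAffine (Spec.map (Y.evaluation U y hy))).2
  have h4 := Scheme.ΓSpecIso_naturality (Y.evaluation U y hy)
  intro z
  obtain ⟨w, hw⟩ := (ConcreteCategory.bijective_of_isIso (Scheme.ΓSpecIso (Y.residueField y)).hom).2 z
  obtain ⟨v, rfl⟩ := h3 w
  refine ⟨(Scheme.ΓSpecIso Γ(Y, U)).hom v, ?_⟩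
  have h5 := congrArg (fun φ => φ.hom v) h4
  exact h5.symm.trans hw

theorem ker_evaluation_le {Y : Scheme.{u}} {U : Y.Opens} (hU : IsAffineOpen U) (y : Y) (hy : y ∈ U) :
    RingHom.ker (Y.evaluation U y hy).hom ≤ (hU.primeIdealOf ⟨y, hy⟩).asIdeal := by
  intro r hr
  rw [hU.primeIdealOf_eq_map_closedPoint]
  have h1 : Y.residue y (Y.presheaf.germ U y hy r) = 0 := hr
  change Y.presheaf.germ U y hy r ∈ IsLocalRing.maximalIdeal _
  exact (IsLocalRing.residue_eq_zero_iff _).1 h1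

theorem smooth_at_closed
    {k : Type u} [Field k]
    (X Y : Scheme.{u}) (f : X ⟶ Y)
    (sY : Y ⟶ Spec (CommRingCat.of k))
    [LocallyOfFiniteType (f ≫ sY)] [LocallyOfFiniteType f] [Smooth sY]
    (hXeq : ∀ C ∈ irreducibleComponents X, topologicalKrullDim C = topologicalKrullDim X)
    (x : X) (hy : IsClosed ({f x} : Set Y)) (hsm : Smooth (pullback.snd f (Y.fromSpecResidueField (f x))))
    (hdim : ∀ C ∈ irreducibleComponents (pullback f (Y.fromSpecResidueField (f x)) : Scheme.{u}),
        topologicalKrullDim C + topologicalKrullDim Y = topologicalKrullDim X) :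
    (f.stalkMap x).hom.FormallySmooth := by
  obtain ⟨_, ⟨U, hU, rfl⟩, hxU, -⟩ :=
    Y.isBasis_affineOpens.exists_subset_of_mem_open (Set.mem_univ (f x)) isOpen_univ
  obtain ⟨_, ⟨V, hV, rfl⟩, hxV, hVU⟩ :=
    X.isBasis_affineOpens.exists_subset_of_mem_open hxU (U.2.preimage f.continuous)
  have hU : IsAffineOpen U := hU
  have hV : IsAffineOpen V := hV
  have hVU : V ≤ f ⁻¹ᵁ U := hVU
  rw [formallySmooth_stalkMap_iff U hU V hV hVU hxV]
  let := (f.appLE U V hVU).hom.toAlgebra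
  let := (Y.evaluation U (f x) hxU).hom.toAlgebra
  let := (structHom sY U).toAlgebra
  let := (structHom (f ≫ sY) V).toAlgebra
  let := Algebra.TensorProduct.rightAlgebra (R := Γ(Y, U)) (A := Γ(X, V)) (B := Y.residueField (f x))
  have : IsScalarTower k Γ(Y, U) Γ(X, V) := .of_algebraMap_eq' (structHom_comp f sY U V hVU).symm
  have : Algebra.Smooth k Γ(Y, U) := structHom_smooth sY hU
  have : Algebra.FiniteType Γ(Y, U) Γ(X, V) := f.finiteType_appLE hU hV hVU
  have hκ : Function.Surjective (algebraMap Γ(Y, U) (Y.residueField (f x))) := evaluation_surj hU _ hxU hy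
  have hpo := CommRingCat.isPushout_tensorProduct Γ(Y, U) Γ(X, V) (Y.residueField (f x))
  obtain ⟨j, hj, hj2⟩ := fiber_chart f hU hV hVU (f x) hxU _ _ _ hpo
  obtain ⟨hs, hF⟩ := fiber_lemma _ _ _ j hj2 _ _ hdim
  have : Algebra.Smooth (Y.residueField (f x)) (TensorProduct Γ(Y, U) Γ(X, V) (Y.residueField (f x))) := hs
  obtain ⟨k1, k2⟩ := ker_inl (A := Γ(X, V)) hκ
  refine mainAlg (k := k) (κ := Y.residueField (f x)) (F := TensorProduct Γ(Y, U) Γ(X, V) (Y.residueField (f x))) hκ k1 k2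
    _ ?_ (topologicalKrullDim X) (topologicalKrullDim Y) ?_ hF (hX_lemma (f ≫ sY) hXeq hV)
  · rw [k2, Ideal.map_le_iff_le_comap]
    refine (ker_evaluation_le hU (f x) hxU).trans ?_
    rw [← IsAffineOpen.comap_primeIdealOf_appLE U hU V hV hVU hxV]
    exact le_rfl
  · rw [← PrimeSpectrum.topologicalKrullDim_eq_ringKrullDim]
    exact IsInducing.topologicalKrullDim_le (f := hU.fromSpec) hU.fromSpec.isOpenEmbedding.isInducing

end

/-- Let `k` be a field and `f : X ⟶ Y` a morphism over `k` between separated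
`k`-schemes of finite type.  If `X` is equidimensional, `Y` is irreducible and smooth over `k`,
and every fiber of `f` over a closed point is smooth over the residue field and of pure
dimension `dim X - dim Y`, then `X` is smooth over `k` and `f` is a smooth morphism. -/
theorem fiberwise_smooth_implies_smooth
    {k : Type u} [Field k]
    (X Y : Scheme.{u}) (f : X ⟶ Y)
    (sX : X ⟶ Spec (CommRingCat.of k)) (sY : Y ⟶ Spec (CommRingCat.of k))
    (hcomm : f ≫ sY = sX)
    (hXsep : IsSeparated sX) (hXlft : LocallyOfFiniteType sX) (hXqc : QuasiCompact sX)
    (hYsep : IsSeparated sY) (hYlft : LocallyOfFiniteType sY) (hYqc : QuasiCompact sY)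
    -- (i) `X` is equidimensional
    (hXeq : ∀ C ∈ irreducibleComponents X, topologicalKrullDim C = topologicalKrullDim X)
    -- (ii) `Y` is irreducible
    (hYirr : IrreducibleSpace Y)
    -- (iii) `Y` is smooth over `k`
    (hYsm : IsSmooth sY)
    -- (iv) every fiber over a closed point is smooth over the residue field, of pure
    -- dimension `dim X - dim Y`
    (hfib : ∀ y : Y, IsClosed ({y} : Set Y) →
      IsSmooth (pullback.snd f (Y.fromSpecResidueField y)) ∧
      ∀ C ∈ irreducibleComponents ((pullback f (Y.fromSpecResidueField y) : Scheme.{u}) : Type u),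
        topologicalKrullDim C + topologicalKrullDim Y = topologicalKrullDim X) :
    IsSmooth sX ∧ IsSmooth f := by
  subst hcomm
  have hYsm' : Smooth sY := hYsm
  have hf : LocallyOfFiniteType f := locallyOfFiniteType_of_comp f sY
  have : IsLocallyNoetherian Y := LocallyOfFiniteType.isLocallyNoetherian sY
  have : JacobsonSpace X := LocallyOfFiniteType.jacobsonSpace (f ≫ sY)
  have : JacobsonSpace Y := LocallyOfFiniteType.jacobsonSpace sY
  have hfp : LocallyOfFinitePresentation f := LocallyOfFinitePresentation.iff_locallyOfFiniteType.2 hf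
  have hs : Smooth f := by
    rw [← Scheme.Hom.smoothLocus_eq_top_iff]
    by_contra H
    obtain ⟨x, hx, hxc⟩ := nonempty_inter_closedPoints (Z := (f.smoothLocus : Set X)ᶜ)
      (by
        rw [Set.nonempty_compl]
        exact fun h => H (SetLike.coe_injective h)) f.smoothLocus.2.isClosed_compl.isLocallyClosed
    refine hx ?_
    have hyc : IsClosed ({f x} : Set Y) := f.closePoints_subset_preimage_closedPoints hxc
    obtain ⟨h1, h2⟩ := hfib _ hyc
    exact smooth_at_closed X Y f sY hXeq x hyc h1 h2
  exact ⟨inferInstanceAs (Smooth (f ≫ sY)), hs⟩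
end

section
/- Let K be an algebraically closed field equipped with a norm (a normed field). Let W be an ℕ²-bigraded K-vector space with an endomorphism F compatible with the grading. Suppose: (i) W_{0,i} = 0 for all i; (ii) W_{•,0} := ⊕_n W_{n,0} is finite-dimensional; (iii) there are positive real constants E, d, b with E ≥ 1 such that |F, W_{n,i}| ≤ E·dⁿ·bⁱ for all (n,i); (iv) D > 1 is a real constant with |F, W_{•,0}| ≤ D. Let Sym(W) be the quotient of the tensor algebra T(W) by the two-sided ideal generated by the elements x⊗y − y⊗x for bihomogeneous x, y ∈ W; this ideal is bihomogeneous, so Sym(W) inherits the ℕ²-bigrading and the induced endomorphism F. Then there exists a real constant C′ (depending on W, F, E, d, b, D but not on n, i) such that |F, Sym(W)_{n,i}| ≤ C′·(n+1)·(i+1)·(max(2Ed, D))ⁿ·(2b)ⁱ for all (n,i) ∈ ℕ×ℕ. -/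
open scoped TensorProduct DirectSum

/-- The `L¹`-trace of an endomorphism of a `K`-vector space: the sum over the eigenvalues `μ`
of `dim (generalized eigenspace of μ) · ‖μ‖`. -/
noncomputable def L1Trace (K : Type*) [NormedField K] {V : Type*} [AddCommGroup V]
    [Module K V] (F : V →ₗ[K] V) : ℝ :=
  ∑ᶠ μ : K, (Module.finrank K ↥(Module.End.maxGenEigenspace F μ) : ℝ) * ‖μ‖

variable (K : Type) [NormedField K] (W : ℕ × ℕ → Type)
  [∀ p, AddCommGroup (W p)] [∀ p, Module K (W p)]

/-- The iterated tensor product `W p₁ ⊗ (W p₂ ⊗ (⋯ ⊗ K))` indexed by a list of bidegrees. -/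
noncomputable def listTensor : List (ℕ × ℕ) → ModuleCat K
  | [] => ModuleCat.of K K
  | p :: l => ModuleCat.of K (W p ⊗[K] (listTensor l))

/-- The endomorphism `F ⊗ ⋯ ⊗ F` of the iterated tensor product. -/
noncomputable def listEnd (F : ∀ p, W p →ₗ[K] W p) :
    (l : List (ℕ × ℕ)) → (listTensor K W l : Type) →ₗ[K] (listTensor K W l : Type)
  | [] => LinearMap.id
  | p :: l => TensorProduct.map (F p) (listEnd F l)

/-- Lists of bidegrees with prescribed total bidegree `(n, i)`. -/
abbrev GradedList (n i : ℕ) : Type :=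
  {l : List (ℕ × ℕ) // (l.map Prod.fst).sum = n ∧ (l.map Prod.snd).sum = i}

/-- The `(n,i)`-th bigraded piece of the tensor algebra `T(W)` of an `ℕ²`-bigraded vector
space: the direct sum, over all tuples of bidegrees summing to `(n,i)`, of the corresponding
iterated tensor products. -/
noncomputable abbrev TensorAlgPiece (n i : ℕ) : Type :=
  Π₀ l : GradedList n i, (listTensor K W l.1 : Type)

/-- The endomorphism of `T(W)_{n,i}` induced by `F`, acting as `F ⊗ ⋯ ⊗ F` on each summand. -/
noncomputable def tensorAlgEnd (F : ∀ p, W p →ₗ[K] W p) (n i : ℕ) :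
    TensorAlgPiece K W n i →ₗ[K] TensorAlgPiece K W n i :=
  DFinsupp.mapRange.linearMap fun l => listEnd K W F l.1

/-- Swap the entries in positions `j` and `j + 1` of a list. -/
def swapAdj {α : Type*} : ℕ → List α → List α
  | 0, a :: b :: t => b :: a :: t
  | n + 1, a :: t => a :: swapAdj n t
  | _, l => l

theorem swapAdj_map_sum {α β : Type*} [AddCommMonoid β] (f : α → β) :
    ∀ (j : ℕ) (l : List α), ((swapAdj j l).map f).sum = (l.map f).sum
  | 0, [] => rfl
  | 0, [a] => rfl
  | 0, a :: b :: t => by simp [swapAdj, add_left_comm]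
  | n + 1, [] => rfl
  | n + 1, a :: t => by simp [swapAdj, swapAdj_map_sum f n t]

/-- The braiding isomorphism of the iterated tensor product exchanging the tensor factors in
positions `j` and `j + 1`. -/
noncomputable def swapMap :
    (j : ℕ) → (l : List (ℕ × ℕ)) →
      (listTensor K W l : Type) →ₗ[K] (listTensor K W (swapAdj j l) : Type)
  | 0, a :: b :: t => (TensorProduct.leftComm K (W a) (W b) (listTensor K W t)).toLinearMap
  | n + 1, a :: t => TensorProduct.map LinearMap.id (swapMap n t)
  | 0, [] => LinearMap.id
  | 0, [_] => LinearMap.id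
  | _ + 1, [] => LinearMap.id

/-- `swapAdj` preserves the total bidegree of a graded list. -/
def swapGraded (n i : ℕ) (j : ℕ) (l : GradedList n i) : GradedList n i :=
  ⟨swapAdj j l.1,
    (swapAdj_map_sum Prod.fst j l.1).trans l.2.1,
    (swapAdj_map_sum Prod.snd j l.1).trans l.2.2⟩

/-- The `(n,i)`-th bigraded piece of the two-sided ideal of `T(W)` generated by the elements
`x ⊗ y − y ⊗ x` for bihomogeneous `x, y ∈ W`: it is spanned by the differences between a
summand of `T(W)_{n,i}` and its image under an adjacent braiding. -/
noncomputable def symRelations (n i : ℕ) : Submodule K (TensorAlgPiece K W n i) :=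
  Submodule.span K
    {z | ∃ (j : ℕ) (l : GradedList n i) (v : (listTensor K W l.1 : Type)),
      z = DFinsupp.single (swapGraded n i j l) (swapMap K W j l.1 v) - DFinsupp.single l v}

section LinAlg
open Module

theorem charpoly_of_tri {K : Type*} [Field K] {V : Type*} [AddCommGroup V] [Module K V]
    [FiniteDimensional K V]
    {ι : Type*} [Fintype ι] [LinearOrder ι] (F : V →ₗ[K] V) (b : Basis ι K V) (lam : ι → K)
    (h : ∀ i, F (b i) - lam i • b i ∈ Submodule.span K (b '' {j | j < i})) :
    F.charpoly = ∏ i, (Polynomial.X - Polynomial.C (lam i)) := by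
  have hent : ∀ i j, LinearMap.toMatrix b b F i j =
      (if i = j then lam j else 0) + b.repr (F (b j) - lam j • b j) i := by
    intro i j
    rw [LinearMap.toMatrix_apply, map_sub, map_smul, b.repr_self, Finsupp.sub_apply,
      Finsupp.smul_apply, Finsupp.single_apply]
    by_cases hij : i = j
    · subst hij; simp
    · simp [hij, Ne.symm hij]
  have hz : ∀ i j, ¬ i < j → b.repr (F (b j) - lam j • b j) i = 0 := by
    intro i j hij
    by_contra hne
    have := (b.mem_span_image.1 (h j)) (Finsupp.mem_support_iff.2 hne)
    exact hij this
  rw [← LinearMap.charpoly_toMatrix F b]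
  rw [Matrix.charpoly_of_isUpperTriangular]
  · refine Finset.prod_congr rfl fun i _ => ?_
    rw [hent, hz i i (lt_irrefl _)]; simp
  · intro i j hij
    have hij' : j < i := hij
    rw [hent, hz i j (not_lt.2 hij'.le), if_neg hij'.ne']; simp

theorem L1_of_basis {K : Type*} [NormedField K] {V : Type*} [AddCommGroup V] [Module K V]
    {ι : Type*} [Fintype ι] (F : V →ₗ[K] V) (b : Basis ι K V) (lam : ι → K) (rk : ι → ℕ)
    (h : ∀ i, F (b i) - lam i • b i ∈ Submodule.span K (b '' {j | rk j < rk i})) :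
    L1Trace K F = ∑ i, ‖lam i‖ := by
  classical
  have hfd : FiniteDimensional K V := Module.Finite.of_basis b
  let e := Fintype.equivFin ι
  let f : ι → ℕ ×ₗ Fin (Fintype.card ι) := fun i => toLex (rk i, e i)
  have hf : Function.Injective f := by
    intro i j hij
    have : (rk i, e i) = (rk j, e j) := toLex.injective hij
    exact e.injective (Prod.mk.inj this).2
  have hchar : F.charpoly = ∏ i, (Polynomial.X - Polynomial.C (lam i)) := by
    let _ : LinearOrder ι := LinearOrder.lift' f hf
    refine charpoly_of_tri F b lam fun i => ?_
    refine Submodule.span_mono (Set.image_mono ?_) (h i)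
    intro j hj
    have : f j < f i := Prod.Lex.toLex_lt_toLex.2 (Or.inl hj)
    exact this
  unfold L1Trace
  have hcount : ∀ μ, (Module.finrank K ↥(Module.End.maxGenEigenspace F μ)) =
      (Finset.univ.filter (fun i => lam i = μ)).card := by
    intro μ
    rw [LinearMap.finrank_maxGenEigenspace_eq, hchar, ← Polynomial.count_roots]
    have : (∏ i, (Polynomial.X - Polynomial.C (lam i))).roots = Finset.univ.val.map lam := by
      rw [← Polynomial.roots_multiset_prod_X_sub_C (Finset.univ.val.map lam), Multiset.map_map]
      rfl
    rw [this, Multiset.count_map]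
    simp [Finset.card, eq_comm]
  simp_rw [hcount]
  rw [finsum_eq_sum_of_support_subset (s := Finset.univ.image lam)]
  · rw [Finset.sum_comp (fun x => ‖x‖) lam]
    simp
  · intro μ hμ
    simp only [Function.mem_support, ne_eq, mul_eq_zero, not_or, Nat.cast_eq_zero,
      Finset.card_eq_zero] at hμ
    obtain ⟨i, hi⟩ := Finset.nonempty_iff_ne_empty.2 hμ.1
    simp at hi ⊢
    exact ⟨i, hi⟩

theorem finrank_quot_le {K : Type*} [Field K] [IsAlgClosed K] {V V' : Type*} [AddCommGroup V]
    [Module K V] [AddCommGroup V'] [Module K V'] [FiniteDimensional K V]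
    (A : V →ₗ[K] V) (F : V' →ₗ[K] V') (π : V →ₗ[K] V') (hs : Function.Surjective π)
    (hc : ∀ x, π (A x) = F (π x)) (μ : K) :
    finrank K (Module.End.maxGenEigenspace F μ) ≤ finrank K (Module.End.maxGenEigenspace A μ) := by
  have hle : ∀ ν, (End.maxGenEigenspace A ν).map π ≤ End.maxGenEigenspace F ν := by
    rintro ν _ ⟨x, hx, rfl⟩
    obtain ⟨k, hk⟩ := (End.mem_maxGenEigenspace A ν x).1 hx
    refine (End.mem_maxGenEigenspace F ν _).2 ⟨k, ?_⟩
    have : ∀ k : ℕ, ∀ x, π (((A - ν • (1 : End K V)) ^ k) x) =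
      ((F - ν • (1 : End K V')) ^ k) (π x) := by
      intro k
      induction k with
      | zero => intro x; simp
      | succ k ih => intro x; rw [pow_succ, pow_succ, Module.End.mul_apply, ih]; simp [hc]
    rw [← this, hk, map_zero]
  have htop : ⨆ ν, (End.maxGenEigenspace A ν).map π = ⊤ := by
    rw [← Submodule.map_iSup, End.iSup_maxGenEigenspace_eq_top, Submodule.map_top,
      LinearMap.range_eq_top.2 hs]
  have hind := End.independent_maxGenEigenspace F
  have heq : End.maxGenEigenspace F μ ≤ (End.maxGenEigenspace A μ).map π := by
    intro x hx
    have hx' : x ∈ (End.maxGenEigenspace A μ).map π ⊔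
        ⨆ (ν) (_ : ν ≠ μ), End.maxGenEigenspace F ν := by
      have : (⊤ : Submodule K V') ≤ (End.maxGenEigenspace A μ).map π ⊔
        ⨆ (ν) (_ : ν ≠ μ), End.maxGenEigenspace F ν := by
        rw [← htop]
        refine iSup_le fun ν => ?_
        by_cases h : ν = μ
        · subst h; exact le_sup_left
        · exact (hle ν).trans (le_sup_of_le_right
            (le_iSup₂_of_le (f := fun ν (_ : ν ≠ μ) => End.maxGenEigenspace F ν) ν h le_rfl))
      exact this trivial
    obtain ⟨y, hy, z, hz, rfl⟩ := Submodule.mem_sup.1 hx'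
    have hz' : z ∈ End.maxGenEigenspace F μ := by
      have := Submodule.sub_mem _ hx (hle μ hy)
      simpa using this
    have := (Submodule.disjoint_def.1 (hind μ)) z hz' hz
    rw [this, add_zero]; exact hy
  have hfd : FiniteDimensional K V' := Module.Finite.of_surjective π hs
  exact (Submodule.finrank_mono heq).trans (Submodule.finrank_map_le _ _)

theorem L1_finite_support {K : Type*} [NormedField K] {V : Type*} [AddCommGroup V] [Module K V]
    [FiniteDimensional K V] (F : V →ₗ[K] V) : (Function.support fun μ : K =>
      (Module.finrank K ↥(Module.End.maxGenEigenspace F μ) : ℝ) * ‖μ‖).Finite := by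
  classical
  refine (F.charpoly.roots.toFinset.finite_toSet).subset ?_
  intro μ hμ
  simp only [Function.mem_support, ne_eq, mul_eq_zero, not_or, Nat.cast_eq_zero] at hμ
  rw [LinearMap.finrank_maxGenEigenspace_eq, ← Polynomial.count_roots] at hμ
  simpa [Multiset.count_eq_zero, and_comm] using hμ.1

theorem L1_nonneg {K : Type*} [NormedField K] {V : Type*} [AddCommGroup V] [Module K V]
    (F : V →ₗ[K] V) : 0 ≤ L1Trace K F :=
  finsum_nonneg fun _ => by positivity

theorem L1_of_span {K : Type*} [NormedField K] [IsAlgClosed K] {V : Type*} [AddCommGroup V]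
    [Module K V] {ι : Type*} [Fintype ι] (F : V →ₗ[K] V) (v : ι → V) (lam : ι → K) (rk : ι → ℕ)
    (hspan : Submodule.span K (Set.range v) = ⊤)
    (h : ∀ i, F (v i) - lam i • v i ∈ Submodule.span K (v '' {j | rk j < rk i})) :
    L1Trace K F ≤ ∑ i, ‖lam i‖ := by
  classical
  have h' : ∀ i, ∃ c ∈ Finsupp.supported K K {j | rk j < rk i},
      Finsupp.linearCombination K v c = F (v i) - lam i • v i := fun i =>
    (Finsupp.mem_span_image_iff_linearCombination K).1 (h i)
  choose c hc hcv using h'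
  let A : (ι →₀ K) →ₗ[K] (ι →₀ K) :=
    Finsupp.linearCombination K (fun i => lam i • Finsupp.single i (1 : K) + c i)
  let π : (ι →₀ K) →ₗ[K] V := Finsupp.linearCombination K v
  have hs : Function.Surjective π := by
    rw [← LinearMap.range_eq_top, Finsupp.range_linearCombination, hspan]
  have hcomm : π ∘ₗ A = F ∘ₗ π := by
    ext i
    simp [A, π, hcv]
  have hA : L1Trace K A = ∑ i, ‖lam i‖ := by
    refine L1_of_basis A Finsupp.basisSingleOne lam rk fun i => ?_
    rw [Module.Basis.mem_span_image]
    have : A (Finsupp.basisSingleOne i) - lam i • (Finsupp.basisSingleOne i) = c i := by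
      simp [A]
    rw [this]
    simpa [Finsupp.mem_supported] using hc i
  rw [← hA]
  have hfd : FiniteDimensional K V := Module.Finite.of_surjective π hs
  unfold L1Trace
  rw [finsum_eq_sum_of_support_subset (s := (L1_finite_support F).toFinset ∪ (L1_finite_support A).toFinset) _ (by simp),
    finsum_eq_sum_of_support_subset (s := (L1_finite_support F).toFinset ∪ (L1_finite_support A).toFinset) _ (by simp)]
  refine Finset.sum_le_sum fun μ _ => ?_
  have := finrank_quot_le A F π hs (fun x => LinearMap.congr_fun hcomm x) μ
  gcongr

theorem exists_tri_basis {K : Type*} [Field K] [IsAlgClosed K] (n : ℕ) :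
    ∀ {V : Type} [AddCommGroup V] [Module K V] [FiniteDimensional K V] (_ : finrank K V = n)
    (F : V →ₗ[K] V), ∃ (b : Basis (Fin n) K V) (lam : Fin n → K) (rk : Fin n → ℕ),
      ∀ i, F (b i) - lam i • b i ∈ Submodule.span K (b '' {j | rk j < rk i}) := by
  induction n with
  | zero =>
    intro V _ _ _ hn F
    exact ⟨Module.finBasisOfFinrankEq K V hn, Fin.elim0, Fin.elim0, fun i => i.elim0⟩
  | succ n ih =>
    intro V _ _ _ hn F
    have : Nontrivial V := Module.nontrivial_of_finrank_pos (R := K) (by omega)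
    obtain ⟨μ, hμ⟩ := Module.End.exists_eigenvalue F
    set N : V →ₗ[K] V := F - μ • (1 : End K V) with hN
    have hNs : LinearMap.range N ≠ ⊤ := by
      intro htop
      have hinj : LinearMap.ker N = ⊥ := LinearMap.ker_eq_bot_iff_range_eq_top.2 htop
      obtain ⟨x, hx⟩ := hμ.exists_hasEigenvector
      have : x ∈ LinearMap.ker N := by
        simp [N, hx.apply_eq_smul]
      rw [hinj] at this
      exact hx.2 (by simpa using this)
    obtain ⟨H, hH, hle⟩ := (eq_top_or_exists_le_coatom (LinearMap.range N)).resolve_left hNs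
    have hinv : ∀ x ∈ H, F x ∈ H := by
      intro x hx
      have : F x = N x + μ • x := by simp [N]
      rw [this]
      exact H.add_mem (hle ⟨x, rfl⟩) (H.smul_mem _ hx)
    obtain ⟨y, hy⟩ : ∃ y, y ∉ H := by
      by_contra hcon
      push Not at hcon
      exact hH.1 (eq_top_iff.2 fun x _ => hcon x)
    have hli : ∀ (c : K), ∀ x ∈ H, c • y + x = 0 → c = 0 := by
      intro c x hx hcx
      by_contra hc
      apply hy
      have : y = c⁻¹ • (-x) := by
        rw [← eq_neg_of_add_eq_zero_left hcx, smul_smul, inv_mul_cancel₀ hc, one_smul]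
      rw [this]
      exact H.smul_mem _ (H.neg_mem hx)
    have hsp : ∀ z : V, ∃ c : K, z + c • y ∈ H := by
      intro z
      have : H ⊔ Submodule.span K {y} = ⊤ := hH.2 _ (by
        refine lt_of_le_of_ne le_sup_left fun heq => hy ?_
        rw [heq]
        exact Submodule.mem_sup_right (Submodule.mem_span_singleton_self y))
      have hz : z ∈ H ⊔ Submodule.span K {y} := by rw [this]; trivial
      obtain ⟨h, hh, w, hw, rfl⟩ := Submodule.mem_sup.1 hz
      obtain ⟨a, rfl⟩ := Submodule.mem_span_singleton.1 hw
      exact ⟨-a, by simpa using hh⟩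
    have hfin : finrank K H = n := by
      let b := Module.Basis.mkFinCons y (Module.finBasis K H) hli hsp
      have := Module.finrank_eq_card_basis b
      simp at this
      omega
    obtain ⟨b, lam, rk, hb⟩ := ih hfin (F.restrict hinv)
    let B := Module.Basis.mkFinCons y b hli hsp
    have hB : (B : Fin (n+1) → V) = Fin.cons y (Subtype.val ∘ b) := Module.Basis.coe_mkFinCons y b hli hsp
    refine ⟨B, Fin.cons μ lam, Fin.cons (1 + ∑ j, rk j) rk, ?_⟩
    intro i
    refine Fin.cases ?_ (fun i => ?_) i
    · have h1 : F y - μ • y ∈ H := hle ⟨y, by simp [N]⟩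
      have h2 : H ≤ Submodule.span K (B '' {j | (Fin.cons (1 + ∑ j, rk j) rk : Fin (n+1) → ℕ) j <
          (Fin.cons (1 + ∑ j, rk j) rk : Fin (n+1) → ℕ) 0}) := by
        have h3 : H = Submodule.span K (Set.range (H.subtype ∘ b)) := by
          rw [Set.range_comp, Submodule.span_image, b.span_eq, Submodule.map_subtype_top]
        conv_lhs => rw [h3]
        apply Submodule.span_mono
        rintro _ ⟨j, rfl⟩
        refine ⟨j.succ, ?_, by rw [hB]; simp⟩
        have : rk j ≤ ∑ j, rk j := Finset.single_le_sum (fun _ _ => Nat.zero_le _) (Finset.mem_univ j)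
        simp only [Set.mem_ofPred_eq, Fin.cons_succ, Fin.cons_zero]
        omega
      have := h2 h1
      rw [hB] at this ⊢
      simpa using this
    · have h1 := Submodule.mem_map_of_mem (f := H.subtype) (hb i)
      rw [← Submodule.span_image, ← Set.image_comp] at h1
      have h2 : ((F.restrict hinv) (b i) - lam i • b i : H) = F (b i : V) - lam i • (b i : V) := rfl
      have h3 : F (B i.succ) - (Fin.cons μ lam : Fin (n+1) → K) i.succ • B i.succ
        = H.subtype ((F.restrict hinv) (b i) - lam i • b i : H) := by
        rw [hB]; simp
      rw [h3]
      refine Submodule.span_mono ?_ h1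
      rintro _ ⟨j, hj, rfl⟩
      exact ⟨j.succ, by simpa using hj, by rw [hB]; simp⟩

end LinAlg
section TrigSec
open Module

/-- `F` has a finite triangular spanning family whose diagonal entries have norms summing to `c`. -/
def Trig {K : Type} [NormedField K] {V : Type} [AddCommGroup V] [Module K V]
    (F : V →ₗ[K] V) (c : ℝ) : Prop :=
  ∃ (ι : Type) (_ : Fintype ι) (v : ι → V) (lam : ι → K) (rk : ι → ℕ),
    Submodule.span K (Set.range v) = ⊤ ∧
    (∀ i, F (v i) - lam i • v i ∈ Submodule.span K (v '' {j | rk j < rk i})) ∧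
    ∑ i, ‖lam i‖ = c

theorem Trig.of_fd {K : Type} [NormedField K] [IsAlgClosed K] {V : Type} [AddCommGroup V]
    [Module K V] [FiniteDimensional K V] (F : V →ₗ[K] V) : Trig F (L1Trace K F) := by
  obtain ⟨b, lam, rk, h⟩ := exists_tri_basis _ rfl F
  exact ⟨_, inferInstance, b, lam, rk, b.span_eq, h, (L1_of_basis F b lam rk h).symm⟩

theorem Trig.tensor {K : Type} [NormedField K] {V V' : Type} [AddCommGroup V]
    [Module K V] [AddCommGroup V'] [Module K V'] {F : V →ₗ[K] V} {G : V' →ₗ[K] V'} {c c' : ℝ}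
    (hF : Trig F c) (hG : Trig G c') : Trig (TensorProduct.map F G) (c * c') := by
  obtain ⟨ι, _, v, lam, rk, hs, ht, rfl⟩ := hF
  obtain ⟨ι', _, vv, lam', rk', hs', ht', rfl⟩ := hG
  refine ⟨ι × ι', inferInstance, fun x => v x.1 ⊗ₜ[K] vv x.2, fun x => lam x.1 * lam' x.2,
    fun x => rk x.1 + rk' x.2, ?_, ?_, ?_⟩
  · rw [eq_top_iff, ← TensorProduct.map₂_mk_top_top_eq_top, ← hs, ← hs',
      Submodule.map₂_span_span]
    apply Submodule.span_mono
    rintro _ ⟨_, ⟨i, rfl⟩, _, ⟨j, rfl⟩, rfl⟩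
    exact ⟨(i, j), rfl⟩
  · rintro ⟨i, j⟩
    have key : ∀ (s : Set ι) (t : Set ι') x y, x ∈ Submodule.span K (v '' s) →
        y ∈ Submodule.span K (vv '' t) →
        (∀ a ∈ s, ∀ b ∈ t, rk a + rk' b < rk i + rk' j) → x ⊗ₜ[K] y ∈
        Submodule.span K ((fun x : ι × ι' => v x.1 ⊗ₜ[K] vv x.2) ''
          {x | rk x.1 + rk' x.2 < rk i + rk' j}) := by
      intro s t x y hx hy hst
      have := Submodule.apply_mem_map₂ (TensorProduct.mk K V V') hx hy
      rw [Submodule.map₂_span_span] at this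
      refine Submodule.span_mono ?_ this
      rintro _ ⟨_, ⟨a, ha, rfl⟩, _, ⟨b, hb, rfl⟩, rfl⟩
      exact ⟨(a, b), hst a ha b hb, rfl⟩
    have hv : v i ∈ Submodule.span K (v '' {i}) := Submodule.subset_span ⟨i, rfl, rfl⟩
    have hv' : vv j ∈ Submodule.span K (vv '' {j}) := Submodule.subset_span ⟨j, rfl, rfl⟩
    have e : TensorProduct.map F G (v i ⊗ₜ[K] vv j) - (lam i * lam' j) • (v i ⊗ₜ[K] vv j) =
        (F (v i) - lam i • v i) ⊗ₜ[K] (G (vv j) - lam' j • vv j) +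
        (lam' j • ((F (v i) - lam i • v i) ⊗ₜ[K] vv j) +
        lam i • (v i ⊗ₜ[K] (G (vv j) - lam' j • vv j))) := by
      simp only [TensorProduct.map_tmul, TensorProduct.sub_tmul, TensorProduct.tmul_sub,
        TensorProduct.smul_tmul', TensorProduct.tmul_smul, smul_sub, mul_smul]
      rw [smul_comm (lam' j) (lam i)]
      abel
    simp only
    rw [e]
    refine Submodule.add_mem _ ?_ (Submodule.add_mem _ (Submodule.smul_mem _ _ ?_)
      (Submodule.smul_mem _ _ ?_))
    · exact key _ _ _ _ (ht i) (ht' j) fun a ha b hb => add_lt_add ha hb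
    · refine key _ _ _ _ (ht i) hv' fun a ha b hb => ?_
      have : b = j := hb
      subst this
      exact Nat.add_lt_add_right ha _
    · refine key _ _ _ _ hv (ht' j) fun a ha b hb => ?_
      have : a = i := ha
      subst this
      exact Nat.add_lt_add_left hb _
  · simp only [norm_mul]
    rw [Fintype.sum_prod_type, Finset.sum_mul_sum]

theorem Trig.one {K : Type} [NormedField K] : Trig (LinearMap.id : K →ₗ[K] K) 1 := by
  refine ⟨Unit, inferInstance, fun _ => (1 : K), fun _ => 1, fun _ => 0, ?_, ?_, by simp⟩
  · rw [Set.range_const]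
    exact Ideal.span_singleton_one
  · intro i
    simp

theorem Trig.listEnd {K : Type} [NormedField K] [IsAlgClosed K] (W : ℕ × ℕ → Type)
    [∀ p, AddCommGroup (W p)] [∀ p, Module K (W p)] [∀ p, FiniteDimensional K (W p)]
    (F : ∀ p, W p →ₗ[K] W p) : ∀ l : List (ℕ × ℕ), Trig (listEnd K W F l)
      (l.map fun p => L1Trace K (F p)).prod
  | [] => Trig.one
  | p :: l => by
    rw [List.map_cons, List.prod_cons]
    exact Trig.tensor (Trig.of_fd (F p)) (Trig.listEnd W F l)

theorem row_le {K : Type} [NormedField K] [IsAlgClosed K] (V : ℕ → Type)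
    [∀ n, AddCommGroup (V n)] [∀ n, Module K (V n)] [∀ n, FiniteDimensional K (V n)]
    (F : ∀ n, V n →ₗ[K] V n) (hfd : FiniteDimensional K (Π₀ n : ℕ, V n)) (N : Finset ℕ) :
    ∑ n ∈ N, L1Trace K (F n) ≤ L1Trace K (DFinsupp.mapRange.linearMap F) := by
  classical
  have h0 := fun n => exists_tri_basis (K := K) _ rfl (F n)
  choose b lam rk h using h0
  let B := DFinsupp.basis b
  have hB : ∀ x, B x = DFinsupp.single x.1 (b x.1 x.2) := by
    rintro ⟨n, i⟩
    apply B.repr.injective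
    rw [B.repr_self]
    simp only [B, DFinsupp.basis, LinearEquiv.trans_apply]
    rw [LinearEquiv.eq_symm_apply]
    simp
  have hfin : Finite (Σ n, Fin (finrank K (V n))) := Module.Finite.finite_basis B
  have : Fintype (Σ n, Fin (finrank K (V n))) := Fintype.ofFinite _
  rw [L1_of_basis _ B (fun x => lam x.1 x.2) (fun x => rk x.1 x.2)]
  · have : ∀ n, L1Trace K (F n) = ∑ i, ‖lam n i‖ := fun n => L1_of_basis _ (b n) _ _ (h n)
    simp_rw [this]
    rw [Finset.sum_sigma']
    exact Finset.sum_le_sum_of_subset_of_nonneg (Finset.subset_univ _) fun _ _ _ => norm_nonneg _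
  · rintro ⟨n, i⟩
    have h1 := Submodule.mem_map_of_mem (f := DFinsupp.lsingle (R := K) n) (h n i)
    rw [← Submodule.span_image, ← Set.image_comp] at h1
    have e : (DFinsupp.mapRange.linearMap F) (B ⟨n, i⟩) - lam n i • B ⟨n, i⟩ =
        DFinsupp.lsingle (R := K) n (F n (b n i) - lam n i • b n i) := by
      rw [hB]
      simp [DFinsupp.mapRange_single]
    simp only
    rw [e]
    refine Submodule.span_mono ?_ h1
    rintro _ ⟨j, hj, rfl⟩
    exact ⟨⟨n, j⟩, hj, by rw [hB]; rfl⟩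

end TrigSec
section Comb

/-- A finite family of lists of total bidegree `(n,i)` covering those satisfying `P`. -/
def Cover (t : ℕ × ℕ → ℝ) (P : List (ℕ × ℕ) → Prop) (n i : ℕ) (c : ℝ) : Prop :=
  ∃ (ι : Type) (_ : Fintype ι) (f : ι → List (ℕ × ℕ)),
    (∀ x, ((f x).map Prod.fst).sum = n ∧ ((f x).map Prod.snd).sum = i) ∧
    (∀ l, P l → (l.map Prod.fst).sum = n → (l.map Prod.snd).sum = i → ∃ x, f x = l) ∧
    ∑ x, ((f x).map t).prod ≤ c

theorem sum_two_pow_rev (m : ℕ) : ∑ j : Fin m, (2 : ℝ) ^ (m - 1 - (j : ℕ)) ≤ 2 ^ m := by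
  rw [Fin.sum_univ_eq_sum_range (fun j => (2 : ℝ) ^ (m - 1 - j)) m,
    Finset.sum_range_reflect (fun j => (2 : ℝ) ^ j) m, geom_sum_eq (by norm_num)]
  norm_num

theorem cover_pos (t : ℕ × ℕ → ℝ) (ht : ∀ p, 0 ≤ t p) (E d b : ℝ) (hE : 1 ≤ E) (hd : 0 < d)
    (hb : 0 < b) (hbound : ∀ p : ℕ × ℕ, t p ≤ E * d ^ p.1 * b ^ p.2) (n : ℕ) :
    ∀ i, Cover t (fun l => ∀ p ∈ l, 1 ≤ p.1 ∧ 1 ≤ p.2) n i ((2 * E * d) ^ n * (2 * b) ^ i) := by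
  induction n using Nat.strong_induction_on with
  | _ n ih =>
  intro i
  rcases n with _ | n
  · have hnil : ∀ l : List (ℕ × ℕ), (∀ p ∈ l, 1 ≤ p.1 ∧ 1 ≤ p.2) → (l.map Prod.fst).sum = 0 →
        l = [] := by
      intro l hl hs
      rcases l with _ | ⟨p, l⟩
      · rfl
      · have := (hl p (by simp)).1
        simp at hs
        omega
    rcases i with _ | i
    · exact ⟨Unit, inferInstance, fun _ => [], by simp, fun l hl hs _ => ⟨(), (hnil l hl hs).symm⟩,
        by simp⟩
    · refine ⟨Empty, inferInstance, fun _ => [], by simp, fun l hl hs hs' => ?_, by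
        simp; positivity⟩
      rw [hnil l hl hs] at hs'
      simp at hs'
  · have ih' : ∀ p : Fin (n + 1) × Fin i, _ := fun p =>
      ih (n + 1 - 1 - (p.1 : ℕ)) (by omega) (i - 1 - (p.2 : ℕ))
    choose ι hι f hf hcov hsum using ih'
    refine ⟨Σ p : Fin (n + 1) × Fin i, ι p, inferInstance,
      fun x => ((x.1.1 : ℕ) + 1, (x.1.2 : ℕ) + 1) :: f x.1 x.2, ?_, ?_, ?_⟩
    · rintro ⟨⟨j, k⟩, x⟩
      have := hf (j, k) x
      have h1 := j.2
      have h2 := k.2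
      simp only [List.map_cons, List.sum_cons]
      simp only at this
      omega
    · intro l hl h1 h2
      rcases l with _ | ⟨⟨j, k⟩, l⟩
      · simp at h1
      · have hjk := hl (j, k) (by simp)
        simp only [List.map_cons, List.sum_cons] at h1 h2
        simp only at hjk
        obtain ⟨x, hx⟩ := hcov (⟨j - 1, by omega⟩, ⟨k - 1, by omega⟩) l
          (fun p hp => hl p (List.mem_cons_of_mem _ hp)) (by simp only; omega) (by simp only; omega)
        refine ⟨⟨(⟨j - 1, by omega⟩, ⟨k - 1, by omega⟩), x⟩, ?_⟩
        simp only [hx]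
        rw [Nat.sub_add_cancel hjk.1, Nat.sub_add_cancel hjk.2]
    · rw [Fintype.sum_sigma]
      simp only [List.map_cons, List.prod_cons, ← Finset.mul_sum]
      have hterm : ∀ p : Fin (n + 1) × Fin i,
          t ((p.1 : ℕ) + 1, (p.2 : ℕ) + 1) * ∑ x, ((f p x).map t).prod ≤
          ((E * d) ^ (n + 1) * b ^ i) * (2 ^ (n + 1 - 1 - (p.1 : ℕ)) * 2 ^ (i - 1 - (p.2 : ℕ))) := by
        rintro ⟨⟨j, hj⟩, ⟨k, hk⟩⟩
        have h1 := hsum (⟨j, hj⟩, ⟨k, hk⟩)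
        have h2 := hbound (j + 1, k + 1)
        simp only at h1 h2 ⊢
        obtain ⟨a, rfl⟩ : ∃ a, n = j + a := ⟨n - j, by omega⟩
        obtain ⟨c, rfl⟩ : ∃ c, i = k + 1 + c := ⟨i - (k + 1), by omega⟩
        have e1 : j + a + 1 - 1 - j = a := by omega
        have e2 : k + 1 + c - 1 - k = c := by omega
        rw [e1, e2] at h1 ⊢
        calc _ ≤ (E * d ^ (j + 1) * b ^ (k + 1)) * ((2 * E * d) ^ a * (2 * b) ^ c) := by
              refine (mul_le_mul_of_nonneg_left h1 (ht _)).trans ?_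
              exact mul_le_mul_of_nonneg_right h2 (by positivity)
          _ = (E ^ (a + 1) * (d ^ (j + a + 1) * b ^ (k + 1 + c))) * (2 ^ a * 2 ^ c) := by
              rw [mul_pow, mul_pow, mul_pow]; ring
          _ ≤ (E ^ (j + a + 1) * (d ^ (j + a + 1) * b ^ (k + 1 + c))) * (2 ^ a * 2 ^ c) := by
              have : E ^ (a + 1) ≤ E ^ (j + a + 1) := pow_le_pow_right₀ hE (by omega)
              gcongr
          _ = _ := by rw [mul_pow]; ring
      refine (Finset.sum_le_sum fun p _ => hterm p).trans ?_
      rw [← Finset.mul_sum, Fintype.sum_prod_type]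
      simp only
      rw [← Finset.sum_mul_sum]
      calc _ ≤ ((E * d) ^ (n + 1) * b ^ i) * (2 ^ (n + 1) * 2 ^ i) := by
            have s1 := sum_two_pow_rev (n + 1)
            have s2 := sum_two_pow_rev i
            gcongr
        _ = _ := by simp only [mul_pow]; ring

theorem cover_good (t : ℕ × ℕ → ℝ) (ht : ∀ p, 0 ≤ t p) (E d b D : ℝ) (hE : 1 ≤ E) (hd : 0 < d)
    (hb : 0 < b) (hbound : ∀ p : ℕ × ℕ, t p ≤ E * d ^ p.1 * b ^ p.2) (hD : 1 < D)
    (hrow : ∀ N : ℕ, ∑ n ∈ Finset.range N, t (n, 0) ≤ D) (i n : ℕ) :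
    Cover t (fun l => ∃ l₁ l₂, l = l₁ ++ l₂ ∧ (∀ p ∈ l₁, 1 ≤ p.1 ∧ p.2 = 0) ∧
      ∀ p ∈ l₂, 1 ≤ p.1 ∧ 1 ≤ p.2) n i ((n + 1) * max (2 * E * d) D ^ n * (2 * b) ^ i) := by
  set M := max (2 * E * d) D with hM
  have hM1 : 1 ≤ M := hD.le.trans (le_max_right _ _)
  have hMD : D ≤ M := le_max_right _ _
  induction n using Nat.strong_induction_on with
  | _ n ih =>
  obtain ⟨ι₀, hι₀, f₀, hf₀, hcov₀, hsum₀⟩ := cover_pos t ht E d b hE hd hb hbound n i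
  have ih' : ∀ j : Fin n, _ := fun j => ih (n - 1 - (j : ℕ)) (by omega)
  choose ι hι f hf hcov hsum using ih'
  refine ⟨ι₀ ⊕ Σ j : Fin n, ι j, inferInstance,
    Sum.elim f₀ (fun x => ((x.1 : ℕ) + 1, 0) :: f x.1 x.2), ?_, ?_, ?_⟩
  · rintro (x | ⟨j, x⟩)
    · exact hf₀ x
    · have := hf j x
      have h1 := j.2
      simp only [Sum.elim_inr, List.map_cons, List.sum_cons]
      omega
  · rintro l ⟨l₁, l₂, rfl, hl₁, hl₂⟩ h1 h2
    rcases l₁ with _ | ⟨⟨j, k⟩, l₁⟩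
    · obtain ⟨x, hx⟩ := hcov₀ l₂ hl₂ h1 h2
      exact ⟨Sum.inl x, hx⟩
    · have hjk := hl₁ (j, k) (by simp)
      simp only [List.cons_append, List.map_cons, List.sum_cons] at h1 h2
      simp only at hjk
      obtain ⟨hj, rfl⟩ := hjk
      obtain ⟨x, hx⟩ := hcov ⟨j - 1, by omega⟩ (l₁ ++ l₂)
        ⟨l₁, l₂, rfl, fun p hp => hl₁ p (List.mem_cons_of_mem _ hp), hl₂⟩
        (by simp only; omega) (by omega)
      refine ⟨Sum.inr ⟨⟨j - 1, by omega⟩, x⟩, ?_⟩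
      simp only [Sum.elim_inr, hx]
      rw [Nat.sub_add_cancel hj]
      rfl
  · rw [Fintype.sum_sum_type, Fintype.sum_sigma]
    simp only [Sum.elim_inl, Sum.elim_inr, List.map_cons, List.prod_cons, ← Finset.mul_sum]
    have hB : ∑ x, ((f₀ x).map t).prod ≤ M ^ n * (2 * b) ^ i := by
      refine hsum₀.trans ?_
      gcongr
      exact le_max_left _ _
    have hterm : ∀ j : Fin n, t ((j : ℕ) + 1, 0) * ∑ x, ((f j x).map t).prod ≤
        t ((j : ℕ) + 1, 0) * (n * M ^ (n - 1) * (2 * b) ^ i) := by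
      intro j
      refine mul_le_mul_of_nonneg_left ((hsum j).trans ?_) (ht _)
      have hj := j.2
      have h1 : ((n - 1 - (j : ℕ) : ℕ) : ℝ) + 1 ≤ n := by
        have : n - 1 - (j : ℕ) + 1 ≤ n := by omega
        exact_mod_cast this
      have h2 : M ^ (n - 1 - (j : ℕ)) ≤ M ^ (n - 1) := pow_le_pow_right₀ hM1 (by omega)
      have h3 : 0 ≤ M := by linarith
      gcongr
    have hsumt : ∑ j : Fin n, t ((j : ℕ) + 1, 0) ≤ D := by
      rw [Fin.sum_univ_eq_sum_range (fun j => t (j + 1, 0)) n]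
      have := hrow (n + 1)
      rw [Finset.sum_range_succ'] at this
      linarith [ht (0, 0)]
    have hA : ∑ j : Fin n, t ((j : ℕ) + 1, 0) * ∑ x, ((f j x).map t).prod ≤
        n * M ^ n * (2 * b) ^ i := by
      refine (Finset.sum_le_sum fun j _ => hterm j).trans ?_
      rw [← Finset.sum_mul]
      calc _ ≤ M * (n * M ^ (n - 1) * (2 * b) ^ i) := by
            have := hsumt.trans hMD
            gcongr
        _ = _ := by
            rcases n with _ | n
            · simp
            · rw [Nat.add_sub_cancel]; ring
    calc _ ≤ _ := add_le_add hB hA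
      _ = _ := by ring

theorem perm_closed {α : Type*} {l l' : List α} (h : l.Perm l') :
    ∀ P : List α → Prop, (∀ j l, P (swapAdj j l) → P l) → P l' → P l := by
  induction h with
  | nil => intro P _ h; exact h
  | cons a _ ih =>
    intro P hP h
    exact ih (fun l => P (a :: l)) (fun j l hl => hP (j + 1) (a :: l) hl) h
  | swap a b l =>
    intro P hP h
    exact hP 0 _ h
  | trans _ _ ih1 ih2 =>
    intro P hP h
    exact ih1 P hP (ih2 P hP h)

end Comb
theorem listTensor_subsingleton {K : Type} [NormedField K] (W : ℕ × ℕ → Type)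
    [∀ p, AddCommGroup (W p)] [∀ p, Module K (W p)] (p : ℕ × ℕ) (hp : Subsingleton (W p)) :
    ∀ l : List (ℕ × ℕ), p ∈ l → Subsingleton (listTensor K W l : Type)
  | [], h => by simp at h
  | q :: l, h => by
    rcases List.mem_cons.1 h with rfl | h
    · exact (inferInstance : Subsingleton (W p ⊗[K] (listTensor K W l : Type)))
    · have := listTensor_subsingleton (K := K) W p hp l h
      exact (inferInstance : Subsingleton (W q ⊗[K] (listTensor K W l : Type)))

theorem L1_sym_le {K : Type} [NormedField K] [IsAlgClosed K]
    (W : ℕ × ℕ → Type)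
    [∀ p, AddCommGroup (W p)] [∀ p, Module K (W p)] [∀ p, FiniteDimensional K (W p)]
    (F : ∀ p, W p →ₗ[K] W p) (hW0 : ∀ i : ℕ, Subsingleton (W (0, i))) (n i : ℕ) (c : ℝ)
    (hc : Cover (fun p => L1Trace K (F p))
      (fun l => ∃ l₁ l₂, l = l₁ ++ l₂ ∧ (∀ p ∈ l₁, 1 ≤ p.1 ∧ p.2 = 0) ∧
      ∀ p ∈ l₂, 1 ≤ p.1 ∧ 1 ≤ p.2) n i c)
    (G : (TensorAlgPiece K W n i ⧸ symRelations K W n i) →ₗ[K]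
            (TensorAlgPiece K W n i ⧸ symRelations K W n i))
    (hG : ∀ x : TensorAlgPiece K W n i,
          G (Submodule.Quotient.mk x) = Submodule.Quotient.mk (tensorAlgEnd K W F n i x)) :
    L1Trace K G ≤ c := by
  classical
  obtain ⟨ι, _, f, hf, hcov, hsum⟩ := hc
  have hT := Trig.listEnd W F
  choose κ hκ v lam rk hspan htri hlam using hT
  let g : ∀ l : GradedList n i, (listTensor K W l.1 : Type) →ₗ[K]
      (TensorAlgPiece K W n i ⧸ symRelations K W n i) := fun l =>
    (symRelations K W n i).mkQ ∘ₗ DFinsupp.lsingle (R := K)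
      (M := fun l : GradedList n i => (listTensor K W l.1 : Type)) l
  let fg : ι → GradedList n i := fun x => ⟨f x, hf x⟩
  have hGg : ∀ l w, G (g l w) = g l (listEnd K W F l.1 w) := by
    intro l w
    refine (hG _).trans ?_
    simp [g, tensorAlgEnd, DFinsupp.mapRange_single]
  have hrel : ∀ j l w, g l w = g (swapGraded n i j l) (swapMap K W j l.1 w) := by
    intro j l w
    refine ((Submodule.Quotient.eq _).2 ?_).symm
    exact Submodule.subset_span ⟨j, l, w, rfl⟩
  let u : (Σ x : ι, κ (f x)) → (TensorAlgPiece K W n i ⧸ symRelations K W n i) :=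
    fun x => g (fg x.1) (v (f x.1) x.2)
  have hfin := L1_of_span G u (fun x => lam (f x.1) x.2) (fun x => rk (f x.1) x.2) ?_ ?_
  · refine hfin.trans (le_trans (le_of_eq ?_) hsum)
    rw [Fintype.sum_sigma]
    exact Finset.sum_congr rfl fun x _ => hlam (f x)
  · have hcovered : ∀ (x : ι) w, g (fg x) w ∈ Submodule.span K (Set.range u) := by
      intro x w
      have hw : w ∈ Submodule.span K (Set.range (v (f x))) := by rw [hspan]; trivial
      have := Submodule.mem_map_of_mem (f := g (fg x)) hw
      rw [← Submodule.span_image] at this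
      refine Submodule.span_mono ?_ this
      rintro _ ⟨_, ⟨y, rfl⟩, rfl⟩
      exact ⟨⟨x, y⟩, rfl⟩
    have hall : ∀ l w, g l w ∈ Submodule.span K (Set.range u) := by
      rintro ⟨l, hl⟩ w
      by_cases h0 : ∃ p ∈ l, p.1 = 0
      · obtain ⟨⟨p, q⟩, hp, rfl⟩ := h0
        have := listTensor_subsingleton (K := K) W (0, q) (hW0 q) l hp
        have hw : w = 0 := this.elim _ _
        rw [hw, map_zero]
        exact Submodule.zero_mem _
      · push Not at h0
        have hperm := List.filter_append_perm (fun p : ℕ × ℕ => p.2 == 0) l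
        revert hl w
        refine perm_closed hperm.symm (fun l => ∀ (hl : _) w,
          g ⟨l, hl⟩ w ∈ Submodule.span K (Set.range u)) ?_ ?_
        · intro j l h hl w
          rw [hrel j]
          exact h _ _
        · intro hl w
          have hP1 : ∀ p ∈ l.filter (fun p : ℕ × ℕ => p.2 == 0), 1 ≤ p.1 ∧ p.2 = 0 := by
            intro p hp
            simp only [List.mem_filter, beq_iff_eq] at hp
            exact ⟨Nat.one_le_iff_ne_zero.2 (h0 p hp.1), hp.2⟩
          have hP2 : ∀ p ∈ l.filter (fun p : ℕ × ℕ => !(p.2 == 0)), 1 ≤ p.1 ∧ 1 ≤ p.2 := by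
            intro p hp
            simp only [List.mem_filter, Bool.not_eq_true', beq_eq_false_iff_ne] at hp
            exact ⟨Nat.one_le_iff_ne_zero.2 (h0 p hp.1), Nat.one_le_iff_ne_zero.2 hp.2⟩
          obtain ⟨x, hx⟩ := hcov _ ⟨_, _, rfl, hP1, hP2⟩ hl.1 hl.2
          have : (⟨_, hl⟩ : GradedList n i) = fg x := Subtype.ext hx.symm
          revert w
          rw [this]
          exact hcovered x
    rw [eq_top_iff]
    rintro q -
    obtain ⟨z, rfl⟩ := (symRelations K W n i).mkQ_surjective q
    induction z using DFinsupp.induction with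
    | h0 => rw [map_zero]; exact Submodule.zero_mem _
    | ha l w z _ _ ih =>
      rw [map_add]
      exact Submodule.add_mem _ (hall l w) ih
  · rintro ⟨x, y⟩
    have h1 := Submodule.mem_map_of_mem (f := g (fg x)) (htri (f x) y)
    rw [← Submodule.span_image, ← Set.image_comp, map_sub, map_smul] at h1
    have e : G (u ⟨x, y⟩) = g (fg x) (listEnd K W F (f x) (v (f x) y)) := hGg _ _
    simp only
    rw [e]
    refine Submodule.span_mono ?_ h1
    rintro _ ⟨z, hz, rfl⟩
    exact ⟨⟨x, z⟩, hz, rfl⟩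

/-- Bound on the `L¹`-trace of the bigraded pieces of the free symmetric
algebra `Sym(W) = T(W)/(x⊗y − y⊗x)`: under the stated hypotheses there is a constant `C′`,
independent of `(n, i)`, such that every endomorphism `G` of `Sym(W)_{n,i}` induced by `F`
(i.e. compatible with the quotient map) satisfies
`|F, Sym(W)_{n,i}| ≤ C′·(n+1)·(i+1)·(max (2Ed) D)ⁿ·(2b)ⁱ`. -/
theorem L1Trace_symmetricAlgebra_le {K : Type} [NormedField K] [IsAlgClosed K]
    (W : ℕ × ℕ → Type)
    [∀ p, AddCommGroup (W p)] [∀ p, Module K (W p)] [∀ p, FiniteDimensional K (W p)]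
    (F : ∀ p, W p →ₗ[K] W p)
    -- (i) `W_{0,i} = 0` for all `i`
    (hW0 : ∀ i : ℕ, Subsingleton (W (0, i)))
    -- (ii) `W_{•,0} = ⊕_n W_{n,0}` is finite-dimensional
    (hrow : FiniteDimensional K (Π₀ n : ℕ, W (n, 0)))
    -- (iii) the `L¹`-trace bounds on the pieces of `W`
    (E d b : ℝ) (hE : 1 ≤ E) (hd : 0 < d) (hb : 0 < b)
    (hbound : ∀ p : ℕ × ℕ, L1Trace K (F p) ≤ E * d ^ p.1 * b ^ p.2)
    -- (iv) `|F, W_{•,0}| ≤ D`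
    (D : ℝ) (hD : 1 < D)
    (hrowbound : L1Trace K (DFinsupp.mapRange.linearMap fun n : ℕ => F (n, 0)) ≤ D) :
    ∃ C' : ℝ, ∀ n i : ℕ,
      ∀ G : (TensorAlgPiece K W n i ⧸ symRelations K W n i) →ₗ[K]
            (TensorAlgPiece K W n i ⧸ symRelations K W n i),
        (∀ x : TensorAlgPiece K W n i,
          G (Submodule.Quotient.mk x) = Submodule.Quotient.mk (tensorAlgEnd K W F n i x)) →
        L1Trace K G ≤ C' * (n + 1) * (i + 1) * max (2 * E * d) D ^ n * (2 * b) ^ i := by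
  refine ⟨1, fun n i G hG => ?_⟩
  have hc := cover_good (fun p => L1Trace K (F p)) (fun p => L1_nonneg _) E d b D hE hd hb hbound
    hD (fun N => (row_le (fun n => W (n, 0)) (fun n => F (n, 0)) hrow (Finset.range N)).trans
      hrowbound) i n
  refine (L1_sym_le W F hW0 n i _ hc G hG).trans ?_
  have hM : 0 ≤ max (2 * E * d) D := by
    exact (by linarith : (0 : ℝ) ≤ D).trans (le_max_right _ _)
  have h1 : 0 ≤ (n + 1) * max (2 * E * d) D ^ n * (2 * b) ^ i := by positivity
  have h2 : (1 : ℝ) ≤ i + 1 := by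
    have : (0 : ℝ) ≤ i := Nat.cast_nonneg i
    linarith
  calc _ ≤ ((n + 1) * max (2 * E * d) D ^ n * (2 * b) ^ i) * ((i : ℝ) + 1) :=
        le_mul_of_one_le_right h1 h2
    _ = _ := by ring
end

section
/- Let q be a prime power. For each integer n ≥ 1 let a_n be the number of closed points of degree n on ℙ¹ over 𝔽_q, namely a_n = N_n + 1 if n = 1 and a_n = N_n if n ≥ 2, where N_n is the number of monic irreducible polynomials of degree n in 𝔽_q[X]. For real numbers t₁, t₂, t₃, t₄ ∈ [0,1) and n ≥ 1 define P_n(t₁,…,t₄) = 1 − 6q^{−2n} + 8q^{−3n} − 3q^{−4n} + ∑_{i=1}^{4} ∑_{d=1}^{∞} t_i^{nd}·(q^{−dn} − 2q^{−(d+1)n} + 2q^{−(d+3)n} − q^{−(d+4)n}) (each inner series converges absolutely). Then: (a) the infinite product Z(t₁,…,t₄) = ∏_{n≥1} P_n(t₁,…,t₄)^{a_n} converges for all (t₁,…,t₄) ∈ [0,1)⁴; (b) the infinite product C = ∏_{n≥1} ((1 − q^{−n})⁶·(1 + 6q^{−n} + q^{−2n}))^{a_n} converges; and (c) lim_{(t₁,…,t₄)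 → (1,1,1,1)} (1−t₁)(1−t₂)(1−t₃)(1−t₄)·Z(t₁,…,t₄) = (1 − q^{−1})^{−4}·C, the limit being taken over (t₁,…,t₄) ∈ [0,1)⁴ tending to (1,1,1,1). -/
open Filter Topology

/-- The number of monic irreducible polynomials of degree `n` in `F[X]`. -/
noncomputable def numMonicIrred (F : Type*) [Field F] (n : ℕ) : ℕ :=
  Nat.card {f : Polynomial F // f.Monic ∧ Irreducible f ∧ f.natDegree = n}

/-- The number `a_n` of closed points of degree `n` on `ℙ¹` over `F`:  the monic irreducible
polynomials of degree `n`, plus one extra point (at infinity) in degree `1`. -/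
noncomputable def numClosedPoints (F : Type*) [Field F] (n : ℕ) : ℕ :=
  if n = 1 then numMonicIrred F n + 1 else numMonicIrred F n

/-- The term of index `d` (for `d ≥ 1`, here reindexed by `d ∈ ℕ` via `d + 1`) of the inner
series of the Euler factor `P_n` in the variable `tᵢ`:
`tᵢ^{nd}·(q^{−dn} − 2q^{−(d+1)n} + 2q^{−(d+3)n} − q^{−(d+4)n})`. -/
noncomputable def innerTerm (q : ℕ) (n : ℕ) (ti : ℝ) (d : ℕ) : ℝ :=
  ti ^ (n * (d + 1)) *
    (((q : ℝ)⁻¹) ^ ((d + 1) * n) - 2 * ((q : ℝ)⁻¹) ^ ((d + 2) * n)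
      + 2 * ((q : ℝ)⁻¹) ^ ((d + 4) * n) - ((q : ℝ)⁻¹) ^ ((d + 5) * n))

/-- The Euler factor `P_n(t₁,…,t₄)` of the virtual height zeta function at a closed point of
degree `n`. -/
noncomputable def eulerFactor (q : ℕ) (n : ℕ) (t : Fin 4 → ℝ) : ℝ :=
  1 - 6 * ((q : ℝ)⁻¹) ^ (2 * n) + 8 * ((q : ℝ)⁻¹) ^ (3 * n) - 3 * ((q : ℝ)⁻¹) ^ (4 * n)
    + ∑ i : Fin 4, ∑' d : ℕ, innerTerm q n (t i) d

/-- The Euler factor of the Tamagawa-type constant at a closed point of degree `n`: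
`(1 − q^{−n})⁶·(1 + 6q^{−n} + q^{−2n})`. -/
noncomputable def tamagawaFactor (q : ℕ) (n : ℕ) : ℝ :=
  (1 - ((q : ℝ)⁻¹) ^ n) ^ 6 * (1 + 6 * ((q : ℝ)⁻¹) ^ n + ((q : ℝ)⁻¹) ^ (2 * n))


open Polynomial in
lemma sum_divisors_numMonicIrred (F : Type*) [Field F] [Fintype F] (n : ℕ) (hn : n ≠ 0) :
    ∑ d ∈ n.divisors, d * numMonicIrred F d = Fintype.card F ^ n := by
  classical
  obtain ⟨p, hp⟩ := CharP.exists F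
  have : Fact (Nat.Prime p) := ⟨CharP.char_is_prime F p⟩
  have : NeZero n := ⟨hn⟩
  let E := FiniteField.Extension F p n
  let _ : Fintype E := Fintype.ofFinite E
  have hint : ∀ x : E, IsIntegral F x := fun x => IsIntegral.of_finite F x
  let T : Finset F[X] := Finset.univ.image (fun x : E => minpoly F x)
  have hT : ∀ f ∈ T, f.Monic ∧ Irreducible f ∧ f.natDegree ∣ n := by
    intro f hf
    obtain ⟨x, -, rfl⟩ := Finset.mem_image.1 hf
    refine ⟨minpoly.monic (hint x), minpoly.irreducible (hint x), ?_⟩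
    have := minpoly.degree_dvd (hint x)
    rwa [FiniteField.finrank_extension] at this
  have hsplit : ∀ f : F[X], Irreducible f → f.natDegree ∣ n →
      (f.map (algebraMap F E)).Splits := by
    intro f hi hd
    rw [hi.natDegree_dvd_iff_dvd_X_pow_card_pow_sub_X] at hd
    refine Splits.of_dvd ?_ ?_ (map_dvd (algebraMap F E) hd)
    · apply IsSplittingField.splits
    · exact map_ne_zero (FiniteField.X_pow_card_pow_sub_X_ne_zero _ hn Finite.one_lt_card)
  have hmin : ∀ f : F[X], f.Monic → Irreducible f → ∀ x : E, minpoly F x = f ↔ aeval x f = 0 := by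
    intro f hm hi x
    constructor
    · rintro rfl; exact minpoly.aeval F x
    · intro h; exact (minpoly.eq_of_irreducible_of_monic hi h hm).symm
  have hT' : ∀ f : F[X], f.Monic → Irreducible f → f.natDegree ∣ n → f ∈ T := by
    intro f hm hi hd
    obtain ⟨x, hx⟩ := (hsplit f hi hd).exists_eval_eq_zero
      (by rw [degree_map]; exact hi.degree_pos.ne')
    rw [eval_map_algebraMap] at hx
    exact Finset.mem_image.2 ⟨x, Finset.mem_univ _, (hmin f hm hi x).2 hx⟩
  have hfib : ∀ f ∈ T, (Finset.univ.filter fun x : E => minpoly F x = f).card = f.natDegree := by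
    intro f hf
    obtain ⟨hm, hi, hd⟩ := hT f hf
    rw [← card_rootSet_eq_natDegree (K := E) (PerfectField.separable_of_irreducible hi)
      (hsplit f hi hd), ← Set.toFinset_card]
    congr 1
    ext x
    simp [hmin f hm hi x, mem_rootSet, hi.ne_zero]
  have h1 : Fintype.card E = ∑ f ∈ T, f.natDegree := by
    rw [← Finset.card_univ, Finset.card_eq_sum_card_fiberwise (f := fun x : E => minpoly F x)
      (t := T) (fun x _ => Finset.mem_image_of_mem _ (Finset.mem_univ x))]
    exact Finset.sum_congr rfl hfib
  have h2 : Fintype.card E = Fintype.card F ^ n := by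
    rw [Fintype.card_eq_nat_card, Fintype.card_eq_nat_card, FiniteField.natCard_extension]
  rw [← h2, h1, ← Finset.sum_fiberwise_of_maps_to (t := n.divisors) (g := natDegree)
    (fun f hf => Nat.mem_divisors.2 ⟨(hT f hf).2.2, hn⟩)]
  refine Finset.sum_congr rfl fun d hd => ?_
  rw [Finset.sum_congr rfl (g := fun _ => d) (fun f hf => (Finset.mem_filter.1 hf).2),
    Finset.sum_const, smul_eq_mul, mul_comm]
  congr 1
  rw [numMonicIrred, ← Nat.card_eq_finsetCard]
  refine Nat.card_congr (Equiv.subtypeEquivRight fun f => ?_)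
  rw [Finset.mem_filter]
  constructor
  · rintro ⟨hm, hi, rfl⟩
    exact ⟨hT' f hm hi (Nat.dvd_of_mem_divisors hd), rfl⟩
  · rintro ⟨hf, h⟩
    exact ⟨(hT f hf).1, (hT f hf).2.1, h⟩

lemma numMonicIrred_le (F : Type*) [Field F] [Fintype F] (n : ℕ) (hn : n ≠ 0) :
    numMonicIrred F n ≤ Fintype.card F ^ n := by
  rw [← sum_divisors_numMonicIrred F n hn]
  refine le_trans ?_ (Finset.single_le_sum (f := fun d => d * numMonicIrred F d)
    (fun _ _ => Nat.zero_le _) (Nat.mem_divisors_self n hn))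
  exact Nat.le_mul_of_pos_left _ (Nat.pos_of_ne_zero hn)

lemma numClosedPoints_le (F : Type*) [Field F] [Fintype F] (n : ℕ) (hn : n ≠ 0) :
    numClosedPoints F n ≤ 2 * Fintype.card F ^ n := by
  have h := numMonicIrred_le F n hn
  have : 0 < Fintype.card F ^ n := pow_pos Fintype.card_pos n
  unfold numClosedPoints
  split_ifs <;> omega

lemma hasProd_monicIrred (F : Type*) [Field F] [Fintype F] (u : ℝ) (hu : 0 ≤ u)
    (hu1 : (Fintype.card F : ℝ) * u < 1) :
    HasProd (fun n : ℕ => (1 - u ^ (n + 1)) ^ numMonicIrred F (n + 1))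
      (1 - (Fintype.card F : ℝ) * u) := by
  have hq1 : (1 : ℝ) ≤ Fintype.card F := by exact_mod_cast Fintype.card_pos
  have hult : u < 1 := by nlinarith
  set Q : ℝ := (Fintype.card F : ℝ) with hQ
  let f : ℕ+ × ℕ+ → ℝ := fun c => (numMonicIrred F c.1 : ℝ) * (u ^ (c.1 * c.2 : ℕ) / (c.2 : ℕ))
  have hfn : ∀ c, 0 ≤ f c := fun c => by positivity
  have hlog : ∀ v : ℝ, 0 ≤ v → v < 1 →
      HasSum (fun m : ℕ+ => v ^ (m : ℕ) / (m : ℕ)) (-Real.log (1 - v)) := by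
    intro v hv hv1
    have h := Real.hasSum_pow_div_log_of_abs_lt_one (x := v) (by rwa [abs_of_nonneg hv])
    rw [← Equiv.pnatEquivNat.symm.hasSum_iff]
    convert h using 2 with m
    simp [Function.comp]
  let g : (Σ n : ℕ+, Nat.divisorsAntidiagonal n) → ℝ := f ∘ sigmaAntidiagonalEquivProd
  have hgm : ∀ m : ℕ+, HasSum (fun c : Nat.divisorsAntidiagonal m => g ⟨m, c⟩)
      ((Q * u) ^ (m : ℕ) / (m : ℕ)) := by
    intro m
    have hm0 : (m : ℝ) ≠ 0 := by exact_mod_cast m.ne_zero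
    have key : ∑ c : Nat.divisorsAntidiagonal m, g ⟨m, c⟩ = (Q * u) ^ (m : ℕ) / (m : ℕ) := by
      have e1 : ∀ c : Nat.divisorsAntidiagonal m, g ⟨m, c⟩ =
          (fun x : ℕ × ℕ => (x.1 * numMonicIrred F x.1 : ℝ) * (u ^ (m : ℕ) / m)) c.1 := by
        rintro ⟨⟨a, b⟩, hc⟩
        have hc' := (Nat.mem_divisorsAntidiagonal.1 hc).1
        have hab : (a : ℝ) * b = m := by exact_mod_cast hc'
        have ha : (a : ℝ) ≠ 0 := by rintro h; rw [h, zero_mul] at hab; exact hm0 hab.symm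
        have hb : (b : ℝ) ≠ 0 := by rintro h; rw [h, mul_zero] at hab; exact hm0 hab.symm
        simp only [g, f, Function.comp, sigmaAntidiagonalEquivProd, Equiv.coe_fn_mk,
          divisorsAntidiagonalFactors, PNat.mk_coe]
        rw [hc', ← hab]
        field_simp
      rw [Finset.sum_congr rfl (fun c _ => e1 c), Finset.univ_eq_attach,
        Finset.sum_attach (Nat.divisorsAntidiagonal (m : ℕ))
          (fun x : ℕ × ℕ => (x.1 * numMonicIrred F x.1 : ℝ) * (u ^ (m : ℕ) / m)),
        Nat.sum_divisorsAntidiagonal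
          (fun x _ => (x * numMonicIrred F x : ℝ) * (u ^ (m : ℕ) / m)), ← Finset.sum_mul]
      have := sum_divisors_numMonicIrred F m m.ne_zero
      have h' : ∑ d ∈ (m : ℕ).divisors, (d * numMonicIrred F d : ℝ) = Q ^ (m : ℕ) := by
        rw [hQ]; exact_mod_cast this
      rw [h', mul_pow, mul_div_assoc]
    rw [← key]
    exact hasSum_fintype _
  have hQu := hlog (Q * u) (by positivity) hu1
  have hgs : Summable g := by
    rw [summable_sigma_of_nonneg (f := g) (fun c => hfn _)]
    refine ⟨fun m => (hgm m).summable, ?_⟩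
    convert hQu.summable using 2 with m
    exact (hgm m).tsum_eq
  have hg : HasSum g (-Real.log (1 - Q * u)) := by
    have h := hgs.hasSum
    have h2 := h.sigma hgm
    rwa [h2.unique hQu] at h
  have hf : HasSum f (-Real.log (1 - Q * u)) := sigmaAntidiagonalEquivProd.hasSum_iff.1 hg
  have hf2 : HasSum (fun d : ℕ+ => (numMonicIrred F d : ℝ) * (-Real.log (1 - u ^ (d : ℕ))))
      (-Real.log (1 - Q * u)) := by
    refine hf.prod_fiberwise fun d => ?_
    have := (hlog (u ^ (d : ℕ)) (by positivity) (pow_lt_one₀ hu hult d.ne_zero)).mul_left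
      (numMonicIrred F d : ℝ)
    simpa only [← pow_mul] using this
  have hf3 := (Equiv.pnatEquivNat.symm.hasSum_iff.2 hf2).neg.rexp
  rw [neg_neg, Real.exp_log (by linarith)] at hf3
  convert hf3 using 2 with n
  have : 0 < 1 - u ^ (n + 1) := sub_pos.2 (pow_lt_one₀ hu hult (by simp))
  simp only [Function.comp, Equiv.pnatEquivNat_symm_apply, Nat.succPNat_coe, Nat.succ_eq_add_one]
  rw [mul_neg, neg_neg, mul_comm, ← Real.rpow_def_of_pos this, Real.rpow_natCast]

lemma hasProd_closedPoints (F : Type*) [Field F] [Fintype F] (u : ℝ) (hu : 0 ≤ u)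
    (hu1 : (Fintype.card F : ℝ) * u < 1) :
    HasProd (fun n : ℕ => (1 - u ^ (n + 1)) ^ numClosedPoints F (n + 1))
      ((1 - (Fintype.card F : ℝ) * u) * (1 - u)) := by
  have h := (hasProd_monicIrred F u hu hu1).mul (hasProd_ite_eq 0 (1 - u))
  convert h using 2 with n
  unfold numClosedPoints
  by_cases hn : n = 0
  · subst hn; simp [pow_succ]
  · simp [hn]

/-- Polynomial form of the regularised Euler factor. -/
noncomputable def regPoly (x y₀ y₁ y₂ y₃ : ℝ) : ℝ :=
  (1 - 6 * x ^ 2 + 8 * x ^ 3 - 3 * x ^ 4) * ((1 - y₀) * (1 - y₁) * (1 - y₂) * (1 - y₃)) +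
  (1 - 2 * x + 2 * x ^ 3 - x ^ 4) *
    (y₀ * ((1 - y₁) * (1 - y₂) * (1 - y₃)) + y₁ * ((1 - y₀) * (1 - y₂) * (1 - y₃))
      + y₂ * ((1 - y₀) * (1 - y₁) * (1 - y₃)) + y₃ * ((1 - y₀) * (1 - y₁) * (1 - y₂)))

lemma regPoly_bound (x y₀ y₁ y₂ y₃ : ℝ) (hx1 : x ≤ 1)
    (h0 : 0 ≤ y₀) (h1 : 0 ≤ y₁) (h2 : 0 ≤ y₂) (h3 : 0 ≤ y₃)
    (g0 : y₀ ≤ x) (g1 : y₁ ≤ x) (g2 : y₂ ≤ x) (g3 : y₃ ≤ x) :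
    |regPoly x y₀ y₁ y₂ y₃ - 1| ≤ 54 * x ^ 2 := by
  have hx : 0 ≤ x := h0.trans g0
  have tri : ∀ {a b c d : ℝ}, 0 ≤ a → a ≤ c → 0 ≤ b → b ≤ d → 0 ≤ a * b ∧ a * b ≤ c * d :=
    fun ha hac hb hbd => ⟨mul_nonneg ha hb, mul_le_mul hac hbd hb (ha.trans hac)⟩
  have u0 : 0 ≤ 1 - y₀ := by linarith
  have u1 : 0 ≤ 1 - y₁ := by linarith
  have u2 : 0 ≤ 1 - y₂ := by linarith
  have u3 : 0 ≤ 1 - y₃ := by linarith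
  have v0 : 1 - y₀ ≤ 1 := by linarith
  have v1 : 1 - y₁ ≤ 1 := by linarith
  have v2 : 1 - y₂ ≤ 1 := by linarith
  have v3 : 1 - y₃ ≤ 1 := by linarith
  have P3 : ∀ {a b c : ℝ}, 0 ≤ a → a ≤ 1 → 0 ≤ b → b ≤ 1 → 0 ≤ c → c ≤ 1 →
      0 ≤ a * b * c ∧ a * b * c ≤ 1 := by
    intro a b c ha ha1 hb hb1 hc hc1
    have h := tri ha ha1 hb hb1
    have h' := tri h.1 h.2 hc hc1
    exact ⟨h'.1, by linarith [h'.2]⟩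
  have X3 : 0 ≤ x ^ 3 ∧ x ^ 3 ≤ x ^ 2 := ⟨by positivity, pow_le_pow_of_le_one hx hx1 (by norm_num)⟩
  have X4 : 0 ≤ x ^ 4 ∧ x ^ 4 ≤ x ^ 2 := ⟨by positivity, pow_le_pow_of_le_one hx hx1 (by norm_num)⟩
  have X2 : 0 ≤ x ^ 2 := by positivity
  have X2' : x ^ 2 ≤ x := by nlinarith
  -- product of all
  have hP : 0 ≤ (1 - y₀) * (1 - y₁) * (1 - y₂) * (1 - y₃) ∧
      (1 - y₀) * (1 - y₁) * (1 - y₂) * (1 - y₃) ≤ 1 := by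
    have h := P3 u0 v0 u1 v1 u2 v2
    have h' := tri h.1 h.2 u3 v3
    exact ⟨h'.1, by linarith [h'.2]⟩
  set P := (1 - y₀) * (1 - y₁) * (1 - y₂) * (1 - y₃) with hPdef
  have s0 := P3 u1 v1 u2 v2 u3 v3
  have s1 := P3 u0 v0 u2 v2 u3 v3
  have s2 := P3 u0 v0 u1 v1 u3 v3
  have s3 := P3 u0 v0 u1 v1 u2 v2
  have r0 := tri h0 g0 s0.1 s0.2
  have r1 := tri h1 g1 s1.1 s1.2
  have r2 := tri h2 g2 s2.1 s2.2
  have r3 := tri h3 g3 s3.1 s3.2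
  set S := y₀ * ((1 - y₁) * (1 - y₂) * (1 - y₃)) + y₁ * ((1 - y₀) * (1 - y₂) * (1 - y₃))
      + y₂ * ((1 - y₀) * (1 - y₁) * (1 - y₃)) + y₃ * ((1 - y₀) * (1 - y₁) * (1 - y₂)) with hS
  have hS0 : 0 ≤ S := by linarith [r0.1, r1.1, r2.1, r3.1]
  have hS1 : S ≤ 4 * x := by linarith [r0.2, r1.2, r2.2, r3.2]
  have e01 := tri h0 g0 h1 g1
  have e02 := tri h0 g0 h2 g2
  have e03 := tri h0 g0 h3 g3
  have e12 := tri h1 g1 h2 g2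
  have e13 := tri h1 g1 h3 g3
  have e23 := tri h2 g2 h3 g3
  have e012 := tri e01.1 e01.2 h2 (g2.trans hx1)
  have e013 := tri e01.1 e01.2 h3 (g3.trans hx1)
  have e023 := tri e02.1 e02.2 h3 (g3.trans hx1)
  have e123 := tri e12.1 e12.2 h3 (g3.trans hx1)
  have e0123 := tri e012.1 e012.2 h3 (g3.trans hx1)
  have key : regPoly x y₀ y₁ y₂ y₃ - 1 =
      (-6 * x ^ 2 + 8 * x ^ 3 - 3 * x ^ 4) * P + (-2 * x + 2 * x ^ 3 - x ^ 4) * S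
      + (-(y₀ * y₁ + y₀ * y₂ + y₀ * y₃ + y₁ * y₂ + y₁ * y₃ + y₂ * y₃)
        + 2 * (y₀ * y₁ * y₂ + y₀ * y₁ * y₃ + y₀ * y₂ * y₃ + y₁ * y₂ * y₃)
        - 3 * (y₀ * y₁ * y₂ * y₃)) := by
    rw [hPdef, hS, regPoly]; ring
  have k1 : |(-6 * x ^ 2 + 8 * x ^ 3 - 3 * x ^ 4) * P| ≤ 17 * x ^ 2 := by
    rw [abs_mul, abs_of_nonneg hP.1]
    have : |(-6 * x ^ 2 + 8 * x ^ 3 - 3 * x ^ 4)| ≤ 17 * x ^ 2 := by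
      rw [abs_le]; constructor <;> linarith [X3.1, X3.2, X4.1, X4.2]
    calc _ ≤ 17 * x ^ 2 * 1 := mul_le_mul this hP.2 hP.1 (by positivity)
      _ = _ := by ring
  have k2 : |(-2 * x + 2 * x ^ 3 - x ^ 4) * S| ≤ 20 * x ^ 2 := by
    rw [abs_mul, abs_of_nonneg hS0]
    have : |(-2 * x + 2 * x ^ 3 - x ^ 4)| ≤ 5 * x := by
      rw [abs_le]; constructor <;> linarith [X3.1, X3.2, X4.1, X4.2]
    calc _ ≤ 5 * x * (4 * x) := mul_le_mul this hS1 hS0 (by positivity)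
      _ = _ := by ring
  have k3 : |(-(y₀ * y₁ + y₀ * y₂ + y₀ * y₃ + y₁ * y₂ + y₁ * y₃ + y₂ * y₃)
        + 2 * (y₀ * y₁ * y₂ + y₀ * y₁ * y₃ + y₀ * y₂ * y₃ + y₁ * y₂ * y₃)
        - 3 * (y₀ * y₁ * y₂ * y₃))| ≤ 17 * x ^ 2 := by
    rw [abs_le]
    constructor <;> linarith [e01.1, e01.2, e02.1, e02.2, e03.1, e03.2, e12.1, e12.2, e13.1,
      e13.2, e23.1, e23.2, e012.1, e012.2, e013.1, e013.2, e023.1, e023.2, e123.1, e123.2,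
      e0123.1, e0123.2]
  rw [key]
  refine (abs_add_three _ _ _).trans ?_
  linarith

lemma innerTerm_eq (q n : ℕ) (s : ℝ) (d : ℕ) :
    innerTerm q n s d = (1 - 2 * ((q : ℝ)⁻¹ ^ n) + 2 * ((q : ℝ)⁻¹ ^ n) ^ 3 - ((q : ℝ)⁻¹ ^ n) ^ 4)
      * ((s ^ n * (q : ℝ)⁻¹ ^ n) * (s ^ n * (q : ℝ)⁻¹ ^ n) ^ d) := by
  unfold innerTerm
  rw [← pow_succ']
  simp only [pow_mul, mul_pow]
  ring

lemma hasSum_innerTerm (q n : ℕ) (s : ℝ) (h0 : 0 ≤ s ^ n * (q : ℝ)⁻¹ ^ n)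
    (h1 : s ^ n * (q : ℝ)⁻¹ ^ n < 1) :
    HasSum (innerTerm q n s)
      ((1 - 2 * ((q : ℝ)⁻¹ ^ n) + 2 * ((q : ℝ)⁻¹ ^ n) ^ 3 - ((q : ℝ)⁻¹ ^ n) ^ 4)
      * ((s ^ n * (q : ℝ)⁻¹ ^ n) * (1 - s ^ n * (q : ℝ)⁻¹ ^ n)⁻¹)) := by
  rw [show innerTerm q n s = _ from funext (innerTerm_eq q n s)]
  exact ((hasSum_geometric_of_lt_one h0 h1).mul_left _).mul_left _

/-- The regularised Euler factor. -/
noncomputable def regFactor (q n : ℕ) (t : Fin 4 → ℝ) : ℝ :=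
  regPoly ((q : ℝ)⁻¹ ^ n) (t 0 ^ n * (q : ℝ)⁻¹ ^ n) (t 1 ^ n * (q : ℝ)⁻¹ ^ n)
    (t 2 ^ n * (q : ℝ)⁻¹ ^ n) (t 3 ^ n * (q : ℝ)⁻¹ ^ n)

lemma qinv_pow_bounds (q n : ℕ) (hq : 2 ≤ q) (hn : n ≠ 0) :
    0 < (q : ℝ)⁻¹ ^ n ∧ (q : ℝ)⁻¹ ^ n < 1 := by
  have : (2 : ℝ) ≤ q := by exact_mod_cast hq
  exact ⟨by positivity, pow_lt_one₀ (by positivity) (inv_lt_one_of_one_lt₀ (by linarith)) hn⟩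

lemma y_bounds (q n : ℕ) (hq : 2 ≤ q) (hn : n ≠ 0) (s : ℝ) (hs : s ∈ Set.Icc (0 : ℝ) 1) :
    0 ≤ s ^ n * (q : ℝ)⁻¹ ^ n ∧ s ^ n * (q : ℝ)⁻¹ ^ n ≤ (q : ℝ)⁻¹ ^ n ∧
      s ^ n * (q : ℝ)⁻¹ ^ n < 1 := by
  obtain ⟨h0, h1⟩ := qinv_pow_bounds q n hq hn
  have a := pow_nonneg hs.1 n
  have b : s ^ n ≤ 1 := pow_le_one₀ hs.1 hs.2
  have c : s ^ n * (q : ℝ)⁻¹ ^ n ≤ (q : ℝ)⁻¹ ^ n := mul_le_of_le_one_left h0.le b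
  exact ⟨mul_nonneg a h0.le, c, c.trans_lt h1⟩

lemma regFactor_eq (q n : ℕ) (hq : 2 ≤ q) (hn : n ≠ 0) (t : Fin 4 → ℝ)
    (ht : ∀ i, t i ∈ Set.Icc (0 : ℝ) 1) :
    regFactor q n t = eulerFactor q n t * ∏ i, (1 - (t i * (q : ℝ)⁻¹) ^ n) := by
  have hs : ∀ i, ∑' d, innerTerm q n (t i) d = _ := fun i =>
    (hasSum_innerTerm q n (t i) (y_bounds q n hq hn _ (ht i)).1
      (y_bounds q n hq hn _ (ht i)).2.2).tsum_eq
  have hne : ∀ i, 1 - t i ^ n * (q : ℝ)⁻¹ ^ n ≠ 0 := fun i =>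
    (sub_pos.2 (y_bounds q n hq hn _ (ht i)).2.2).ne'
  unfold eulerFactor regFactor
  simp only [hs, mul_pow, Fin.sum_univ_four, Fin.prod_univ_four]
  have n0 := hne 0
  have n1 := hne 1
  have n2 := hne 2
  have n3 := hne 3
  rw [mul_comm 2 n, mul_comm 3 n, mul_comm 4 n, pow_mul, pow_mul, pow_mul]
  generalize t 0 ^ n * (q : ℝ)⁻¹ ^ n = y0 at *
  generalize t 1 ^ n * (q : ℝ)⁻¹ ^ n = y1 at *
  generalize t 2 ^ n * (q : ℝ)⁻¹ ^ n = y2 at *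
  generalize t 3 ^ n * (q : ℝ)⁻¹ ^ n = y3 at *
  generalize (q : ℝ)⁻¹ ^ n = x
  unfold regPoly
  field_simp

lemma regFactor_one (q n : ℕ) : regFactor q n (fun _ => 1) = tamagawaFactor q n := by
  unfold regFactor tamagawaFactor regPoly
  rw [mul_comm 2 n, pow_mul]
  simp only [one_pow, one_mul]
  ring

lemma regFactor_bound (q n : ℕ) (hq : 2 ≤ q) (hn : n ≠ 0) (t : Fin 4 → ℝ)
    (ht : ∀ i, t i ∈ Set.Icc (0 : ℝ) 1) (a : ℕ) (ha : a ≤ 2 * q ^ n) :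
    ‖regFactor q n t ^ a - 1‖ ≤ 108 * Real.exp 108 * (q : ℝ)⁻¹ ^ n := by
  obtain ⟨h0, h1⟩ := qinv_pow_bounds q n hq hn
  have hy := fun i => y_bounds q n hq hn _ (ht i)
  have hb : |regFactor q n t - 1| ≤ 54 * ((q : ℝ)⁻¹ ^ n) ^ 2 :=
    regPoly_bound _ _ _ _ _ h1.le (hy 0).1 (hy 1).1 (hy 2).1 (hy 3).1 (hy 0).2.1 (hy 1).2.1
      (hy 2).2.1 (hy 3).2.1
  have hq0 : (q : ℝ) ≠ 0 := by positivity
  have hx : (q : ℝ) ^ n * (q : ℝ)⁻¹ ^ n = 1 := by rw [← mul_pow, mul_inv_cancel₀ hq0, one_pow]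
  have ha' : (a : ℝ) ≤ 2 * (q : ℝ) ^ n := by exact_mod_cast ha
  have h := Finset.norm_prod_one_add_sub_one_le (Finset.range a)
    (fun _ => regFactor q n t - 1)
  simp only [Finset.prod_const, Finset.sum_const, Finset.card_range, add_sub_cancel,
    nsmul_eq_mul, Real.norm_eq_abs] at h
  rw [Real.norm_eq_abs]
  set x := (q : ℝ)⁻¹ ^ n
  have hz : (a : ℝ) * |regFactor q n t - 1| ≤ 108 * x := by
    calc (a : ℝ) * |regFactor q n t - 1| ≤ (2 * (q : ℝ) ^ n) * (54 * x ^ 2) :=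
          mul_le_mul ha' hb (abs_nonneg _) (by positivity)
      _ = 108 * x * ((q : ℝ) ^ n * x) := by ring
      _ = 108 * x := by rw [hx, mul_one]
  have e1 : Real.exp ((a : ℝ) * |regFactor q n t - 1|) ≤ Real.exp (108 * x) :=
    Real.exp_le_exp.2 hz
  have e2 : Real.exp (108 * x) - 1 ≤ 108 * x * Real.exp (108 * x) := by
    have := Real.add_one_le_exp (-(108 * x))
    have h3 : Real.exp (-(108 * x)) * Real.exp (108 * x) = 1 := by
      rw [← Real.exp_add]; simp
    nlinarith [Real.exp_pos (108 * x)]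
  have e3 : Real.exp (108 * x) ≤ Real.exp 108 := Real.exp_le_exp.2 (by linarith)
  have e4 : 108 * x * Real.exp (108 * x) ≤ 108 * x * Real.exp 108 :=
    mul_le_mul_of_nonneg_left e3 (by positivity)
  linarith

lemma summable_bound (q : ℕ) (hq : 2 ≤ q) :
    Summable fun n : ℕ => 108 * Real.exp 108 * (q : ℝ)⁻¹ ^ (n + 1) := by
  have h := qinv_pow_bounds q 1 hq one_ne_zero
  rw [pow_one] at h
  exact ((summable_nat_add_iff 1).2 (summable_geometric_of_lt_one h.1.le h.2)).mul_left _

lemma multipliable_regFactor (F : Type*) [Field F] [Fintype F]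
    (q : ℕ) (hq : q = Fintype.card F) (t : Fin 4 → ℝ) (ht : ∀ i, t i ∈ Set.Icc (0 : ℝ) 1) :
    Multipliable fun n : ℕ => regFactor q (n + 1) t ^ numClosedPoints F (n + 1) := by
  have hq2 : 2 ≤ q := hq ▸ Fintype.one_lt_card
  have := multipliable_one_add_of_summable
    (f := fun n : ℕ => regFactor q (n + 1) t ^ numClosedPoints F (n + 1) - 1)
    ((summable_bound q hq2).of_nonneg_of_le (fun _ => norm_nonneg _) fun n =>
      regFactor_bound q (n + 1) hq2 (by simp) t ht _
        (hq ▸ numClosedPoints_le F (n + 1) (by simp)))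
  simpa only [add_sub_cancel] using this

lemma hasProd_euler (F : Type*) [Field F] [Fintype F]
    (q : ℕ) (hq : q = Fintype.card F) (t : Fin 4 → ℝ) (ht : ∀ i, t i ∈ Set.Ico (0 : ℝ) 1) :
    HasProd (fun n : ℕ => eulerFactor q (n + 1) t ^ numClosedPoints F (n + 1))
      ((∏' n : ℕ, regFactor q (n + 1) t ^ numClosedPoints F (n + 1)) /
        ∏ i, ((1 - t i) * (1 - t i * (q : ℝ)⁻¹))) := by
  have hq2 : 2 ≤ q := hq ▸ Fintype.one_lt_card
  have hqR : (2 : ℝ) ≤ q := by exact_mod_cast hq2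
  have ht' : ∀ i, t i ∈ Set.Icc (0 : ℝ) 1 := fun i => ⟨(ht i).1, (ht i).2.le⟩
  have hqi := qinv_pow_bounds q 1 hq2 one_ne_zero
  rw [pow_one] at hqi
  have hqt : ∀ i, (q : ℝ) * (t i * (q : ℝ)⁻¹) = t i := fun i => by field_simp
  have hlt : ∀ i, t i * (q : ℝ)⁻¹ < 1 := fun i =>
    mul_lt_one_of_nonneg_of_lt_one_left (ht i).1 (ht i).2 hqi.2.le
  have hz : HasProd (fun n : ℕ => ∏ i, (1 - (t i * (q : ℝ)⁻¹) ^ (n + 1)) ^ numClosedPoints F (n + 1))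
      (∏ i, ((1 - t i) * (1 - t i * (q : ℝ)⁻¹))) := by
    refine hasProd_prod fun i _ => ?_
    have := hasProd_closedPoints F (t i * (q : ℝ)⁻¹) (mul_nonneg (ht i).1 hqi.1.le)
      (by rw [← hq, hqt]; exact (ht i).2)
    rwa [← hq, hqt] at this
  have hne : ∏ i, ((1 - t i) * (1 - t i * (q : ℝ)⁻¹)) ≠ 0 :=
    Finset.prod_ne_zero_iff.2 fun i _ =>
      mul_ne_zero (sub_pos.2 (ht i).2).ne' (sub_pos.2 (hlt i)).ne'
  have hfun : (fun n : ℕ => eulerFactor q (n + 1) t ^ numClosedPoints F (n + 1)) =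
      fun n : ℕ => regFactor q (n + 1) t ^ numClosedPoints F (n + 1) /
        ∏ i, (1 - (t i * (q : ℝ)⁻¹) ^ (n + 1)) ^ numClosedPoints F (n + 1) := by
    funext n
    rw [regFactor_eq q (n + 1) hq2 (by simp) t ht', mul_pow, Finset.prod_pow,
      mul_div_cancel_right₀]
    refine pow_ne_zero _ (Finset.prod_ne_zero_iff.2 fun i _ => ?_)
    exact (sub_pos.2 (pow_lt_one₀ (mul_nonneg (ht i).1 hqi.1.le) (hlt i) (by simp))).ne'
  rw [hfun]
  exact (multipliable_regFactor F q hq t ht').hasProd.div₀ hz hne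

/-- Over a finite field with `q` elements: the inner series of each Euler
factor converges absolutely; (a) the virtual height zeta function
`Z(t) = ∏_{n≥1} P_n(t)^{a_n}` converges for `t ∈ [0,1)⁴`; (b) the Euler product
`C = ∏_{n≥1} ((1−q^{−n})⁶(1+6q^{−n}+q^{−2n}))^{a_n}` converges; and (c)
`(1−t₁)(1−t₂)(1−t₃)(1−t₄)·Z(t) → (1−q^{−1})^{−4}·C` as `t → (1,1,1,1)` within `[0,1)⁴`. -/
theorem virtual_height_zeta_limit (F : Type*) [Field F] [Fintype F]
    (q : ℕ) (hq : q = Fintype.card F) :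
    (∀ n : ℕ, 1 ≤ n → ∀ t : Fin 4 → ℝ, (∀ i, t i ∈ Set.Ico (0 : ℝ) 1) → ∀ i : Fin 4,
      Summable fun d : ℕ => |innerTerm q n (t i) d|) ∧
    (∀ t : Fin 4 → ℝ, (∀ i, t i ∈ Set.Ico (0 : ℝ) 1) →
      Multipliable fun n : ℕ => eulerFactor q (n + 1) t ^ numClosedPoints F (n + 1)) ∧
    (Multipliable fun n : ℕ => tamagawaFactor q (n + 1) ^ numClosedPoints F (n + 1)) ∧
    Tendsto
      (fun t : Fin 4 → ℝ =>
        (∏ i, (1 - t i)) * ∏' n : ℕ, eulerFactor q (n + 1) t ^ numClosedPoints F (n + 1))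
      (nhdsWithin (fun _ => 1) {t : Fin 4 → ℝ | ∀ i, t i ∈ Set.Ico (0 : ℝ) 1})
      (nhds (((1 - (q : ℝ)⁻¹)⁻¹) ^ 4 *
        ∏' n : ℕ, tamagawaFactor q (n + 1) ^ numClosedPoints F (n + 1))) := by
  have hq2 : 2 ≤ q := hq ▸ Fintype.one_lt_card
  have h1mem : ∀ i : Fin 4, (fun _ : Fin 4 => (1 : ℝ)) i ∈ Set.Icc (0 : ℝ) 1 := fun _ => by simp
  have hqi := qinv_pow_bounds q 1 hq2 one_ne_zero
  rw [pow_one] at hqi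
  refine ⟨fun n hn t ht i => ?_, fun t ht => (hasProd_euler F q hq t ht).multipliable, ?_, ?_⟩
  · have hy := y_bounds q n hq2 (by omega) (t i) ⟨(ht i).1, (ht i).2.le⟩
    exact (hasSum_innerTerm q n (t i) hy.1 hy.2.2).summable.abs
  · simpa only [regFactor_one] using multipliable_regFactor F q hq _ h1mem
  · have hlim : Tendsto (fun t : Fin 4 → ℝ =>
        ∏' n : ℕ, (1 + (regFactor q (n + 1) t ^ numClosedPoints F (n + 1) - 1)))
        (nhdsWithin (fun _ => 1) {t : Fin 4 → ℝ | ∀ i, t i ∈ Set.Ico (0 : ℝ) 1})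
        (nhds (∏' n : ℕ, (1 + (tamagawaFactor q (n + 1) ^ numClosedPoints F (n + 1) - 1)))) := by
      refine tendsto_tprod_one_add_of_dominated_convergence (summable_bound q hq2) (fun n => ?_) ?_
      · have hc : Continuous fun t : Fin 4 → ℝ =>
            regFactor q (n + 1) t ^ numClosedPoints F (n + 1) - 1 := by
          unfold regFactor regPoly
          fun_prop
        have := (hc.tendsto (fun _ => 1)).mono_left
          (nhdsWithin_le_nhds (s := {t : Fin 4 → ℝ | ∀ i, t i ∈ Set.Ico (0 : ℝ) 1}))
        simpa only [regFactor_one] using this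
      · filter_upwards [self_mem_nhdsWithin] with t ht n
        exact regFactor_bound q (n + 1) hq2 (by simp) t (fun i => ⟨(ht i).1, (ht i).2.le⟩) _
          (hq ▸ numClosedPoints_le F (n + 1) (by simp))
    simp only [add_sub_cancel] at hlim
    have hpre : Tendsto (fun t : Fin 4 → ℝ => ∏ i, (1 - t i * (q : ℝ)⁻¹)⁻¹)
        (nhdsWithin (fun _ => 1) {t : Fin 4 → ℝ | ∀ i, t i ∈ Set.Ico (0 : ℝ) 1})
        (nhds (((1 - (q : ℝ)⁻¹)⁻¹) ^ 4)) := by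
      have h4 : ((1 - (q : ℝ)⁻¹)⁻¹) ^ 4 = ∏ _i : Fin 4, (1 - 1 * (q : ℝ)⁻¹)⁻¹ := by simp
      rw [h4]
      refine tendsto_finsetProd _ fun i _ => ?_
      refine Tendsto.inv₀ ?_ (by rw [one_mul]; exact (sub_pos.2 hqi.2).ne')
      have hc : Continuous fun t : Fin 4 → ℝ => 1 - t i * (q : ℝ)⁻¹ := by fun_prop
      exact (hc.tendsto (fun _ => 1)).mono_left nhdsWithin_le_nhds
    refine (hpre.mul hlim).congr' ?_
    filter_upwards [self_mem_nhdsWithin] with t ht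
    rw [(hasProd_euler F q hq t ht).tprod_eq, Finset.prod_mul_distrib, Finset.prod_inv_distrib]
    have hne : ∏ i, (1 - t i) ≠ 0 :=
      Finset.prod_ne_zero_iff.2 fun i _ => (sub_pos.2 (ht i).2).ne'
    field_simp
end
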